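/- arXiv:2507.21031 — 3 statements merged into one kernel-verified Lean document; each statement's English description precedes it below -/
import Mathlib

section
/- Let n, m ≥ 1, set N = 2n+2m and γ = γ_{2n,2m}. For π ∈ S_NC(2n,2m), the subgroup generated by π and the interval involution I_N acts transitively on {1,…,N} if and only if one of the following holds: (a) π⁻¹γ separates even numbers; or (b) there exist even numbers r ∈ {1,…,2n} and s ∈ {2n+1,…,N} lying in the same cycle of π⁻¹γ, such that whenever two distinct even numbers lie in a common cycle of π⁻¹γ, those two numbers are r and s. -/
noncomputable def cycleCount {N : ℕ} (π : Equiv.Perm (Fin N)) : ℕ :=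
  Set.ncard {O : Set (Fin N) | ∃ x, O = {y | π.SameCycle x y}}

noncomputable def cyclesIn {N : ℕ} (π : Equiv.Perm (Fin N)) (C : Set (Fin N)) : ℕ :=
  Set.ncard {O : Set (Fin N) | (∃ x, O = {y | π.SameCycle x y}) ∧ O ⊆ C}

/-- The annular permutation `γ_{p,q}` of `{1,…,p+q}` (0-indexed as `Fin (p+q)`),
with the two cycles `(1,…,p)` and `(p+1,…,p+q)`. -/
def annularGamma (p q : ℕ) : Equiv.Perm (Fin (p + q)) :=
  finSumFinEquiv.permCongr ((finRotate p).sumCongr (finRotate q))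

/-- The interval involution `I_N = (1 2)(3 4)⋯(N-1 N)` of `{1,…,N}`
(0-indexed: swaps `2i ↔ 2i+1`), for `N` even. -/
def intervalInvolution (N : ℕ) : Equiv.Perm (Fin N) :=
  Function.Involutive.toPerm
    (fun x => ⟨if x.val % 2 = 0 then min (x.val + 1) (N - 1) else x.val - 1, by
      rcases x with ⟨v, hv⟩
      dsimp only
      split <;> omega⟩)
    (by
      intro x
      rcases x with ⟨v, hv⟩
      apply Fin.ext
      dsimp only
      split_ifs <;> omega)

/-- The subgroup generated by `π` and `ρ` acts transitively on `Fin N`. -/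
def JointTrans {N : ℕ} (π ρ : Equiv.Perm (Fin N)) : Prop :=
  ∀ x y : Fin N, ∃ g ∈ Subgroup.closure ({π, ρ} : Set (Equiv.Perm (Fin N))), g x = y

/-- `α` separates even numbers: no cycle of `α` contains two distinct even numbers
(an element `x : Fin N` represents the number `x.val + 1`). -/
def SeparatesEven {N : ℕ} (α : Equiv.Perm (Fin N)) : Prop :=
  ∀ x y : Fin N, α.SameCycle x y → (x.val + 1) % 2 = 0 → (y.val + 1) % 2 = 0 → x = y

/-- `π ∈ S_NC(p,q)`: annular non-crossing permutations. -/
def AnnularNC (p q : ℕ) (π : Equiv.Perm (Fin (p + q))) : Prop :=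
  JointTrans π (annularGamma p q) ∧
    cycleCount π + cycleCount (π⁻¹ * annularGamma p q) = p + q

/-- `A` witnesses bipartiteness of the graph `G_π`: `π(A) = A` and for each `i`,
exactly one of the (1-indexed) numbers `2i-1`, `2i` belongs to `A`. -/
def BipartSet {N : ℕ} (π : Equiv.Perm (Fin N)) (A : Set (Fin N)) : Prop :=
  (⇑π) '' A = A ∧ ∀ i : ℕ, ∀ h : 2 * i + 1 < N,
    Xor' ((⟨2 * i, Nat.lt_of_succ_lt h⟩ : Fin N) ∈ A) ((⟨2 * i + 1, h⟩ : Fin N) ∈ A)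

/-- The graph `G_π` is bipartite. -/
def GraphBipartite {N : ℕ} (π : Equiv.Perm (Fin N)) : Prop :=
  ∃ A : Set (Fin N), BipartSet π A

/-- `π ∈ J_{2n,2m}`: annular non-crossing, bipartite graph, and `π⁻¹γ` separates even. -/
def memJ (n m : ℕ) (π : Equiv.Perm (Fin (2 * n + 2 * m))) : Prop :=
  AnnularNC (2 * n) (2 * m) π ∧ GraphBipartite π ∧
    SeparatesEven (π⁻¹ * annularGamma (2 * n) (2 * m))

namespace Setoid

variable {X : Type*}

/-- The equivalence relation obtained from `s` by merging all classes that meet `S`. -/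
def collapse (s : Setoid X) (S : Set X) : Setoid X where
  r x y := s x y ∨ ((∃ u ∈ S, s x u) ∧ ∃ v ∈ S, s y v)
  iseqv :=
    { refl := fun x => Or.inl (s.refl' x)
      symm := by
        rintro x y (h | ⟨h₁, h₂⟩)
        · exact Or.inl (s.symm' h)
        · exact Or.inr ⟨h₂, h₁⟩
      trans := by
        rintro x y z (h | ⟨h₁, h₂⟩) (k | ⟨⟨v, hv, hyv⟩, k₂⟩)
        · exact Or.inl (s.trans' h k)
        · exact Or.inr ⟨⟨v, hv, s.trans' h hyv⟩, k₂⟩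
        · obtain ⟨w, hw, hyw⟩ := h₂
          exact Or.inr ⟨h₁, w, hw, s.trans' (s.symm' k) hyw⟩
        · exact Or.inr ⟨h₁, k₂⟩ }

theorem collapse_apply {s : Setoid X} {S : Set X} {x y : X} :
    s.collapse S x y ↔ s x y ∨ ((∃ u ∈ S, s x u) ∧ ∃ v ∈ S, s y v) :=
  Iff.rfl

theorem le_collapse (s : Setoid X) (S : Set X) : s ≤ s.collapse S :=
  fun _ _ h => Or.inl h

theorem collapse_rel_of_mem (s : Setoid X) {S : Set X} {u v : X} (hu : u ∈ S) (hv : v ∈ S) :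
    s.collapse S u v :=
  Or.inr ⟨⟨u, hu, s.refl' u⟩, v, hv, s.refl' v⟩

theorem collapse_le_iff {s r : Setoid X} {S : Set X} :
    s.collapse S ≤ r ↔ s ≤ r ∧ ∀ u ∈ S, ∀ v ∈ S, r u v := by
  constructor
  · intro h
    exact ⟨(le_collapse s S).trans h, fun u hu v hv => h (collapse_rel_of_mem s hu hv)⟩
  · rintro ⟨hs, hS⟩ x y (h | ⟨⟨u, hu, hxu⟩, v, hv, hyv⟩)
    · exact hs h
    · exact r.trans' (hs hxu) (r.trans' (hS u hu v hv) (r.symm' (hs hyv)))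

theorem collapse_eq_self {s : Setoid X} {S : Set X} (h : ∀ u ∈ S, ∀ v ∈ S, s u v) :
    s.collapse S = s :=
  le_antisymm (collapse_le_iff.2 ⟨le_rfl, h⟩) (le_collapse s S)

/-- The number of classes of an equivalence relation. -/
noncomputable def classCount (s : Setoid X) : ℕ := Nat.card (Quotient s)

theorem classCount_le_of_le [Finite X] {s r : Setoid X} (h : s ≤ r) :
    r.classCount ≤ s.classCount := by
  refine Nat.card_le_card_of_surjective (Quotient.map' (s₁ := s) (s₂ := r) id fun _ _ hab => h hab) ?_
  rintro ⟨x⟩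
  exact ⟨Quotient.mk s x, rfl⟩

theorem card_le_classCount [Finite X] {Y : Type*} (s : Setoid X) (f : X → Y)
    (hf : Function.Surjective f) (h : ∀ x y, s x y → f x = f y) :
    Nat.card Y ≤ s.classCount := by
  refine Nat.card_le_card_of_surjective (Quotient.lift (s := s) f h) ?_
  intro y
  obtain ⟨x, rfl⟩ := hf y
  exact ⟨Quotient.mk s x, rfl⟩

theorem classCount_le_card [Finite X] (s : Setoid X) : s.classCount ≤ Nat.card X :=
  Nat.card_le_card_of_surjective (Quotient.mk s) Quotient.mk_surjective

theorem classCount_le_one_iff [Finite X] {s : Setoid X} :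
    s.classCount ≤ 1 ↔ ∀ x y, s x y := by
  rw [classCount, Finite.card_le_one_iff_subsingleton]
  constructor
  · intro h x y
    exact Quotient.exact (h.elim (Quotient.mk s x) (Quotient.mk s y))
  · intro h
    constructor
    rintro ⟨x⟩ ⟨y⟩
    exact Quotient.sound (h x y)

theorem classCount_collapse_add [Finite X] (s : Setoid X) {S : Set X} (hS : S.Nonempty) :
    (s.collapse S).classCount + (Quotient.mk s '' S).ncard = s.classCount + 1 := by
  classical
  obtain ⟨u₀, hu₀⟩ := hS
  set T := Quotient.mk s '' S with hT
  have mem_T : ∀ x, Quotient.mk s x ∈ T ↔ ∃ u ∈ S, s x u := by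
    intro x
    constructor
    · rintro ⟨u, hu, h⟩
      exact ⟨u, hu, s.symm' (Quotient.exact h)⟩
    · rintro ⟨u, hu, h⟩
      exact ⟨u, hu, Quotient.sound (s.symm' h)⟩
  let f : X → Option (Tᶜ : Set (Quotient s)) := fun x =>
    if h : Quotient.mk s x ∈ T then none else some ⟨Quotient.mk s x, h⟩
  have hf : ∀ x y, s.collapse S x y ↔ f x = f y := by
    intro x y
    rw [collapse_apply, ← mem_T, ← mem_T]
    by_cases hx : Quotient.mk s x ∈ T <;> by_cases hy : Quotient.mk s y ∈ T
    · simp [f, hx, hy]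
    · simp only [f, hx, hy, dif_pos, dif_neg, not_false_eq_true, and_false, or_false, reduceCtorEq,
        iff_false]
      intro h
      exact hy (Quotient.sound h ▸ hx)
    · simp only [f, hx, hy, dif_pos, dif_neg, not_false_eq_true, false_and, or_false, reduceCtorEq,
        iff_false]
      intro h
      exact hx ((Quotient.sound h : Quotient.mk s x = Quotient.mk s y) ▸ hy)
    · simp only [f, hx, hy, dif_neg, not_false_eq_true, false_and, or_false, Option.some.injEq,
        Subtype.mk.injEq]
      exact ⟨fun h => Quotient.sound h, fun h => Quotient.exact h⟩
  have hbij : Function.Bijective (Quotient.lift (s := s.collapse S) f fun x y h => (hf x y).1 h) := by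
    constructor
    · rintro ⟨x⟩ ⟨y⟩ h
      exact Quotient.sound ((hf x y).2 h)
    · rintro (_ | ⟨⟨x⟩, hx⟩)
      · refine ⟨Quotient.mk _ u₀, ?_⟩
        exact dif_pos ((mem_T u₀).2 ⟨u₀, hu₀, s.refl' u₀⟩)
      · exact ⟨Quotient.mk _ x, dif_neg hx⟩
  have h1 : (s.collapse S).classCount = (Tᶜ).ncard + 1 := by
    rw [classCount, Nat.card_congr (Equiv.ofBijective _ hbij), Finite.card_option,
      Nat.card_coe_set_eq]
  have h2 := Set.ncard_add_ncard_compl T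
  rw [h1, classCount]
  omega

theorem classCount_collapse_pair [Finite X] {s : Setoid X} {a b : X} (h : ¬ s a b) :
    (s.collapse {a, b}).classCount + 1 = s.classCount := by
  have h1 := classCount_collapse_add s (Set.insert_nonempty a {b})
  have h2 : Quotient.mk s a ≠ Quotient.mk s b := fun e => h (Quotient.exact e)
  rw [Set.image_pair, Set.ncard_pair h2] at h1
  omega

theorem classCount_le_collapse_pair [Finite X] (s : Setoid X) (a b : X) :
    s.classCount ≤ (s.collapse {a, b}).classCount + 1 := by
  by_cases h : s a b
  · rw [collapse_eq_self]
    · omega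
    · rintro u (rfl | rfl) v (rfl | rfl)
      exacts [s.refl' _, h, s.symm' h, s.refl' _]
  · exact (classCount_collapse_pair h).ge

end Setoid

namespace Equiv.Perm

variable {X : Type*}

theorem sameCycle_setoid_le_iff [Finite X] {f : Perm X} {r : Setoid X} :
    SameCycle.setoid f ≤ r ↔ ∀ x, r x (f x) := by
  constructor
  · intro h x
    exact h (sameCycle_apply_right.2 (SameCycle.refl f x))
  · intro h x y hxy
    obtain ⟨i, -, rfl⟩ := SameCycle.exists_pow_eq' hxy
    clear hxy
    induction i with
    | zero => exact r.refl' x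
    | succ i ih =>
      rw [pow_succ', mul_apply]
      exact r.trans' ih (h _)

theorem sameCycle_setoid_apply (f : Perm X) (x : X) : SameCycle.setoid f x (f x) :=
  sameCycle_apply_right.2 (SameCycle.refl f x)

theorem sameCycle_mul_swap [Finite X] [DecidableEq X] {f : Perm X} {a b : X}
    (h : ¬ f.SameCycle a b) : (f * swap a b).SameCycle a b := by
  by_contra hb
  have key : ∀ j : ℕ, (f * swap a b).SameCycle a ((f ^ (j + 1)) b) := by
    intro j
    induction j with
    | zero =>
      have h2 : (f * swap a b).SameCycle a ((f * swap a b) a) := sameCycle_setoid_apply _ a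
      simpa using h2
    | succ j ih =>
      have hne_b : (f ^ (j + 1)) b ≠ b := fun e => hb (by rwa [e] at ih)
      have hne_a : (f ^ (j + 1)) b ≠ a := fun e => h
        (SameCycle.symm ⟨((j + 1 : ℕ) : ℤ), by rw [zpow_natCast]; exact e⟩)
      have h2 := sameCycle_setoid_apply (f * swap a b) ((f ^ (j + 1)) b)
      rw [mul_apply, swap_apply_of_ne_of_ne hne_a hne_b, ← mul_apply, ← pow_succ'] at h2
      exact ih.trans h2
  have h1 := key (orderOf f - 1)
  rw [Nat.sub_add_cancel (orderOf_pos f), pow_orderOf_eq_one] at h1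
  exact hb h1

theorem setoid_mul_swap_le [Finite X] [DecidableEq X] (f : Perm X) (a b : X)
    {s : Setoid X} (hf : SameCycle.setoid f ≤ s) (hab : s a b) :
    SameCycle.setoid (f * swap a b) ≤ s := by
  rw [sameCycle_setoid_le_iff] at hf ⊢
  intro x
  rw [mul_apply]
  refine s.trans' ?_ (hf _)
  rcases eq_or_ne x a with rfl | ha
  · rw [swap_apply_left]
    exact hab
  rcases eq_or_ne x b with rfl | hb
  · rw [swap_apply_right]
    exact s.symm' hab
  · rw [swap_apply_of_ne_of_ne ha hb]

theorem sup_setoid_mul_swap_collapse [Finite X] [DecidableEq X] (s : Setoid X) (f : Perm X)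
    (a b : X) : (s ⊔ SameCycle.setoid (f * swap a b)).collapse {a, b} =
      (s ⊔ SameCycle.setoid f).collapse {a, b} := by
  have key : ∀ g : Perm X, (s ⊔ SameCycle.setoid (g * swap a b)).collapse {a, b} ≤
      (s ⊔ SameCycle.setoid g).collapse {a, b} := by
    intro g
    have hab : (s ⊔ SameCycle.setoid g).collapse {a, b} a b :=
      Setoid.collapse_rel_of_mem _ (by simp) (by simp)
    have hle := Setoid.le_collapse (s ⊔ SameCycle.setoid g) {a, b}
    refine Setoid.collapse_le_iff.2 ⟨sup_le (le_sup_left.trans hle) ?_, ?_⟩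
    · exact setoid_mul_swap_le g a b (le_sup_right.trans hle) hab
    · exact fun u hu v hv => Setoid.collapse_rel_of_mem _ hu hv
  refine le_antisymm (key f) ?_
  have := key (f * swap a b)
  rwa [mul_assoc, swap_mul_self, mul_one] at this

theorem setoid_mul_swap_collapse [Finite X] [DecidableEq X] (f : Perm X) (a b : X) :
    (SameCycle.setoid (f * swap a b)).collapse {a, b} = (SameCycle.setoid f).collapse {a, b} := by
  simpa using sup_setoid_mul_swap_collapse ⊥ f a b

theorem classCount_mul_swap_add_one [Finite X] [DecidableEq X] {f : Perm X} {a b : X}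
    (h : ¬ f.SameCycle a b) :
    (SameCycle.setoid (f * swap a b)).classCount + 1 = (SameCycle.setoid f).classCount := by
  rw [← Setoid.classCount_collapse_pair (s := SameCycle.setoid f) h,
    ← setoid_mul_swap_collapse, Setoid.collapse_eq_self]
  have hab := sameCycle_mul_swap h
  rintro u (rfl | rfl) v (rfl | rfl)
  exacts [SameCycle.refl _ _, hab, hab.symm, SameCycle.refl _ _]

theorem classCount_mul_swap_le [Finite X] [DecidableEq X] (f : Perm X) (a b : X) :
    (SameCycle.setoid (f * swap a b)).classCount ≤ (SameCycle.setoid f).classCount + 1 := by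
  refine (Setoid.classCount_le_collapse_pair _ a b).trans ?_
  rw [setoid_mul_swap_collapse]
  exact Nat.add_le_add_right (Setoid.classCount_le_of_le (Setoid.le_collapse _ _)) 1

theorem setoid_mul_le_sup [Finite X] (f g : Perm X) :
    SameCycle.setoid (f * g) ≤ SameCycle.setoid f ⊔ SameCycle.setoid g := by
  rw [sameCycle_setoid_le_iff]
  intro x
  exact Setoid.trans' _
    ((le_sup_right : _ ≤ SameCycle.setoid f ⊔ SameCycle.setoid g) (sameCycle_setoid_apply g x))
    ((le_sup_left : SameCycle.setoid f ≤ _) (sameCycle_setoid_apply f (g x)))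

theorem setoid_inv (f : Perm X) : SameCycle.setoid f⁻¹ = SameCycle.setoid f := by
  ext x y
  exact sameCycle_inv

theorem classCount_sup_swap_step [Finite X] [DecidableEq X] (π σ : Perm X) (a b : X) :
    2 * (SameCycle.setoid π ⊔ SameCycle.setoid σ).classCount +
        (SameCycle.setoid (π⁻¹ * σ * swap a b)).classCount ≤
      1 + 2 * (SameCycle.setoid π ⊔ SameCycle.setoid (σ * swap a b)).classCount +
        (SameCycle.setoid (π⁻¹ * σ)).classCount := by
  by_cases h : (SameCycle.setoid π ⊔ SameCycle.setoid σ) a b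
  · have h1 := classCount_mul_swap_le (π⁻¹ * σ) a b
    have h2 : SameCycle.setoid π ⊔ SameCycle.setoid (σ * swap a b) ≤
        SameCycle.setoid π ⊔ SameCycle.setoid σ :=
      sup_le le_sup_left (setoid_mul_swap_le σ a b le_sup_right h)
    have h3 := Setoid.classCount_le_of_le h2
    omega
  · have h1 : ¬ (π⁻¹ * σ).SameCycle a b := by
      intro hab
      refine h ?_
      have := setoid_mul_le_sup π⁻¹ σ hab
      rwa [setoid_inv] at this
    have h2 := classCount_mul_swap_add_one h1
    have h3 := Setoid.classCount_collapse_pair h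
    rw [← sup_setoid_mul_swap_collapse] at h3
    have h4 := Setoid.classCount_le_of_le
      (Setoid.le_collapse (SameCycle.setoid π ⊔ SameCycle.setoid (σ * swap a b)) {a, b})
    omega

theorem setoid_one : SameCycle.setoid (1 : Perm X) = ⊥ := by
  ext x y
  exact sameCycle_one

/-- Monotonicity of the genus: passing from `σ` to `σ * τ` along a geodesic does not decrease
the genus of the pair `(π, σ)`. -/
theorem classCount_sup_mul_le [Finite X] (π σ τ : Perm X) :
    2 * (SameCycle.setoid π ⊔ SameCycle.setoid σ).classCount +
        (SameCycle.setoid (π⁻¹ * σ * τ)).classCount + (SameCycle.setoid τ).classCount ≤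
      Nat.card X + 2 * (SameCycle.setoid π ⊔ SameCycle.setoid (σ * τ)).classCount +
        (SameCycle.setoid (π⁻¹ * σ)).classCount := by
  classical
  induction hk : Nat.card X - (SameCycle.setoid τ).classCount using Nat.strong_induction_on
    generalizing τ with
  | _ k ih =>
    subst hk
    by_cases hτ : τ = 1
    · subst hτ
      have := Setoid.classCount_le_card (SameCycle.setoid (1 : Perm X))
      simp only [mul_one]
      omega
    obtain ⟨a, ha⟩ : ∃ a, τ⁻¹ a ≠ a := by
      by_contra! h
      exact hτ (inv_eq_one.1 (Equiv.ext h))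
    obtain ⟨ρ, hρ⟩ : ∃ ρ, ρ = τ * swap (τ⁻¹ a) a := ⟨_, rfl⟩
    have hfix : ρ a = a := by simp [hρ]
    have hnot : ¬ ρ.SameCycle (τ⁻¹ a) a := fun h => ha (h.symm.eq_of_left hfix).symm
    have h1 := classCount_mul_swap_add_one hnot
    have h2 := Setoid.classCount_le_card (SameCycle.setoid ρ)
    have hτρ : τ = ρ * swap (τ⁻¹ a) a := by rw [hρ, mul_assoc, swap_mul_self, mul_one]
    rw [← hτρ] at h1
    have h3 := ih _ (by omega) ρ rfl
    have h4 := classCount_sup_swap_step π (σ * ρ) (τ⁻¹ a) a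
    simp only [mul_assoc, ← hτρ] at h3 h4 ⊢
    omega

/-- The genus inequality for a pair of permutations. -/
theorem classCount_genus_le [Finite X] (α β : Perm X) :
    (SameCycle.setoid α).classCount + (SameCycle.setoid β).classCount +
        (SameCycle.setoid (α⁻¹ * β)).classCount ≤
      Nat.card X + 2 * (SameCycle.setoid α ⊔ SameCycle.setoid β).classCount := by
  have h := classCount_sup_mul_le α 1 β
  rw [setoid_one, sup_bot_eq, mul_one, one_mul, setoid_inv] at h
  omega

end Equiv.Perm

namespace Setoid

variable {X : Type*}

theorem classCount_collapse_collapse_iff [Finite X] (s : Setoid X) {S T : Set X}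
    (hS : S.Nonempty) (hT : T.Nonempty) :
    ((s.collapse S).collapse T).classCount + S.ncard + T.ncard ≤ s.classCount + 2 ↔
      (∀ u ∈ S, ∀ v ∈ S, s u v → u = v) ∧ ∀ u ∈ T, ∀ v ∈ T, s.collapse S u v → u = v := by
  have key : ∀ (r : Setoid X) (A : Set X),
      (∀ u ∈ A, ∀ v ∈ A, r u v → u = v) ↔ (Quotient.mk r '' A).ncard = A.ncard := by
    intro r A
    rw [Set.ncard_image_iff]
    exact ⟨fun h u hu v hv huv => h u hu v hv (Quotient.exact huv),
      fun h u hu v hv huv => h hu hv (Quotient.sound huv)⟩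
  rw [key, key]
  have h1 := classCount_collapse_add s hS
  have h2 := classCount_collapse_add (s.collapse S) hT
  have h3 : (Quotient.mk s '' S).ncard ≤ S.ncard := Set.ncard_image_le
  have h4 : (Quotient.mk (s.collapse S) '' T).ncard ≤ T.ncard := Set.ncard_image_le
  omega

theorem separates_collapse_iff {s : Setoid X} {S T : Set X} (hST : Disjoint S T) :
    ((∀ u ∈ S, ∀ v ∈ S, s u v → u = v) ∧ ∀ u ∈ T, ∀ v ∈ T, s.collapse S u v → u = v) ↔
      (∀ x ∈ S ∪ T, ∀ y ∈ S ∪ T, s x y → x = y) ∨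
        ∃ r ∈ S, ∃ t ∈ T, s r t ∧ ∀ x ∈ S ∪ T, ∀ y ∈ S ∪ T, x ≠ y → s x y →
          (x = r ∧ y = t) ∨ (x = t ∧ y = r) := by
  have hd : ∀ x ∈ S, x ∉ T := fun x hx hx' => hST.le_bot ⟨hx, hx'⟩
  constructor
  · rintro ⟨h1, h2⟩
    have h2' : ∀ u ∈ T, ∀ v ∈ T, s u v → u = v := fun u hu v hv h => h2 u hu v hv (Or.inl h)
    have pair : ∀ r ∈ S, ∀ t ∈ T, ∀ r' ∈ S, ∀ t' ∈ T, s r t → s r' t' → r' = r ∧ t' = t := by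
      intro r hr t ht r' hr' t' ht' h h'
      have e : t' = t := h2 t' ht' t ht (Or.inr ⟨⟨r', hr', s.symm' h'⟩, r, hr, s.symm' h⟩)
      subst e
      exact ⟨h1 r' hr' r hr (s.trans' h' (s.symm' h)), rfl⟩
    have main : ∀ r ∈ S, ∀ t ∈ T, s r t → ∀ x ∈ S ∪ T, ∀ y ∈ S ∪ T, x ≠ y → s x y →
        (x = r ∧ y = t) ∨ (x = t ∧ y = r) := by
      rintro r hr t ht hrt x (hx | hx) y (hy | hy) hne hxy
      · exact absurd (h1 x hx y hy hxy) hne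
      · exact Or.inl (pair r hr t ht x hx y hy hrt hxy)
      · exact Or.inr (pair r hr t ht y hy x hx hrt (s.symm' hxy)).symm
      · exact absurd (h2' x hx y hy hxy) hne
    by_cases hsep : ∃ r ∈ S, ∃ t ∈ T, s r t
    · obtain ⟨r, hr, t, ht, hrt⟩ := hsep
      exact Or.inr ⟨r, hr, t, ht, hrt, main r hr t ht hrt⟩
    · refine Or.inl ?_
      rintro x (hx | hx) y (hy | hy) hxy
      · exact h1 x hx y hy hxy
      · exact absurd ⟨x, hx, y, hy, hxy⟩ hsep
      · exact absurd ⟨y, hy, x, hx, s.symm' hxy⟩ hsep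
      · exact h2' x hx y hy hxy
  · rintro (h | ⟨r, hr, t, ht, -, h⟩)
    · refine ⟨fun u hu v hv => h u (Or.inl hu) v (Or.inl hv), ?_⟩
      rintro u hu v hv (huv | ⟨⟨w, hw, huw⟩, -⟩)
      · exact h u (Or.inr hu) v (Or.inr hv) huv
      · exact absurd (h u (Or.inr hu) w (Or.inl hw) huw ▸ hu) (hd w hw)
    · have cross : ∀ u ∈ T, ∀ w ∈ S, s u w → u = t := by
        intro u hu w hw huw
        rcases h u (Or.inr hu) w (Or.inl hw) (fun e => hd w hw (e ▸ hu)) huw with e | e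
        · exact absurd (e.1 ▸ hu) (hd r hr)
        · exact e.1
      constructor
      · intro u hu v hv huv
        by_contra hne
        rcases h u (Or.inl hu) v (Or.inl hv) hne huv with e | e
        · exact hd v hv (e.2 ▸ ht)
        · exact hd u hu (e.1 ▸ ht)
      · rintro u hu v hv (huv | ⟨⟨w, hw, huw⟩, w', hw', hvw⟩)
        · by_contra hne
          rcases h u (Or.inr hu) v (Or.inr hv) hne huv with e | e
          · exact hd r hr (e.1 ▸ hu)
          · exact hd r hr (e.2 ▸ hv)
        · rw [cross u hu w hw huw, cross v hv w' hw' hvw]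

end Setoid

open Equiv.Perm

theorem cycleCount_eq_classCount {N : ℕ} (π : Equiv.Perm (Fin N)) :
    cycleCount π = (SameCycle.setoid π).classCount := by
  rw [Setoid.classCount, Nat.card_congr (Setoid.quotientEquivClasses _), Nat.card_coe_set_eq,
    cycleCount]
  congr 1
  ext O
  refine exists_congr fun x => ?_
  have : {y | π.SameCycle x y} = {y | SameCycle.setoid π y x} :=
    Set.ext fun y => ⟨fun h => h.symm, fun h => h.symm⟩
  rw [this]

theorem jointTrans_iff_classCount_le_one {N : ℕ} (π σ : Equiv.Perm (Fin N)) :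
    JointTrans π σ ↔ (SameCycle.setoid π ⊔ SameCycle.setoid σ).classCount ≤ 1 := by
  rw [Setoid.classCount_le_one_iff]
  set r := SameCycle.setoid π ⊔ SameCycle.setoid σ
  set G := Subgroup.closure ({π, σ} : Set (Equiv.Perm (Fin N)))
  have hr_le : r ≤ MulAction.orbitRel G (Fin N) := by
    have key : ∀ f ∈ G, SameCycle.setoid f ≤ MulAction.orbitRel G (Fin N) := by
      intro f hf
      rw [sameCycle_setoid_le_iff]
      intro x
      exact Setoid.symm' _ ⟨⟨f, hf⟩, rfl⟩
    exact sup_le (key π (Subgroup.subset_closure (by simp)))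
      (key σ (Subgroup.subset_closure (by simp)))
  constructor
  · intro h x y
    obtain ⟨g, hg, rfl⟩ := h x y
    have key : SameCycle.setoid g ≤ r := by
      induction hg using Subgroup.closure_induction with
      | mem f hf =>
        rcases hf with rfl | rfl
        exacts [le_sup_left, le_sup_right]
      | one => rw [setoid_one]; exact bot_le
      | mul f g _ _ hf hg => exact (setoid_mul_le_sup f g).trans (sup_le hf hg)
      | inv f _ hf => rwa [setoid_inv]
    exact key (sameCycle_setoid_apply g x)
  · intro h x y
    obtain ⟨⟨g, hg⟩, hgx⟩ := hr_le (h y x)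
    exact ⟨g, hg, hgx⟩

theorem annularGamma_val {p q : ℕ} (x : Fin (p + q)) :
    (annularGamma p q x).val =
      if x.val + 1 = p then 0 else if x.val + 1 = p + q then p else x.val + 1 := by
  have hrot : ∀ (k : ℕ) (i : Fin k),
      (finRotate k i).val = if i.val + 1 = k then 0 else i.val + 1 := by
    intro k i
    obtain ⟨k, rfl⟩ : ∃ l, k = l + 1 := ⟨k - 1, by have := i.isLt; omega⟩
    rw [coe_finRotate]
    simp [Fin.ext_iff]
  obtain ⟨z, rfl⟩ := finSumFinEquiv.surjective x
  rcases z with i | i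
  · have := i.isLt
    rw [annularGamma, Equiv.permCongr_apply, Equiv.symm_apply_apply, sumCongr_apply,
      Sum.map_inl, finSumFinEquiv_apply_left, finSumFinEquiv_apply_left, Fin.val_castAdd, Fin.val_castAdd, hrot]
    split_ifs <;> omega
  · have := i.isLt
    rw [annularGamma, Equiv.permCongr_apply, Equiv.symm_apply_apply, sumCongr_apply,
      Sum.map_inr, finSumFinEquiv_apply_right, finSumFinEquiv_apply_right, Fin.val_natAdd, Fin.val_natAdd, hrot]
    split_ifs <;> omega

theorem intervalInvolution_val {N : ℕ} (x : Fin N) :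
    (intervalInvolution N x).val = if x.val % 2 = 0 then min (x.val + 1) (N - 1) else x.val - 1 :=
  rfl

theorem intervalInvolution_inv (N : ℕ) : (intervalInvolution N)⁻¹ = intervalInvolution N :=
  Function.Involutive.toPerm_symm _

/-- The permutation `I⁻¹ γ`, which fixes the odd numbers and rotates the even numbers of each of
the two cycles of `γ`. -/
def evenRotation (n m : ℕ) : Equiv.Perm (Fin (2 * n + 2 * m)) :=
  (intervalInvolution (2 * n + 2 * m))⁻¹ * annularGamma (2 * n) (2 * m)

/-- The even numbers of the first cycle of `γ`. -/
def evenLeft (n m : ℕ) : Set (Fin (2 * n + 2 * m)) := {x | (x.val + 1) % 2 = 0 ∧ x.val < 2 * n}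

/-- The even numbers of the second cycle of `γ`. -/
def evenRight (n m : ℕ) : Set (Fin (2 * n + 2 * m)) := {x | (x.val + 1) % 2 = 0 ∧ 2 * n ≤ x.val}

theorem mem_evenLeft_union_evenRight {n m : ℕ} {x : Fin (2 * n + 2 * m)} :
    x ∈ evenLeft n m ∪ evenRight n m ↔ (x.val + 1) % 2 = 0 := by
  simp only [evenLeft, evenRight, Set.mem_union, Set.mem_ofPred_eq]
  omega

theorem disjoint_evenLeft_evenRight (n m : ℕ) : Disjoint (evenLeft n m) (evenRight n m) :=
  Set.disjoint_left.2 fun _ h h' => absurd h.2 (not_lt.2 h'.2)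

theorem ncard_evenLeft (n m : ℕ) : (evenLeft n m).ncard = n := by
  let f : Fin n → Fin (2 * n + 2 * m) := fun i => ⟨2 * i.val + 1, by omega⟩
  have hf : Function.Injective f := by
    intro i j h
    simp only [f, Fin.mk.injEq] at h
    omega
  have hr : evenLeft n m = f '' Set.univ := by
    ext x
    simp only [evenLeft, Set.mem_ofPred_eq, Set.image_univ, Set.mem_range, f, Fin.ext_iff]
    constructor
    · rintro ⟨h1, h2⟩
      exact ⟨⟨x.val / 2, by omega⟩, by dsimp only; omega⟩
    · rintro ⟨i, hi⟩
      omega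
  rw [hr, Set.ncard_image_of_injective _ hf, Set.ncard_univ, Nat.card_fin]

theorem ncard_evenRight (n m : ℕ) : (evenRight n m).ncard = m := by
  let f : Fin m → Fin (2 * n + 2 * m) := fun i => ⟨2 * n + 2 * i.val + 1, by omega⟩
  have hf : Function.Injective f := by
    intro i j h
    simp only [f, Fin.mk.injEq] at h
    omega
  have hr : evenRight n m = f '' Set.univ := by
    ext x
    simp only [evenRight, Set.mem_ofPred_eq, Set.image_univ, Set.mem_range, f, Fin.ext_iff]
    constructor
    · rintro ⟨h1, h2⟩
      exact ⟨⟨(x.val - 2 * n) / 2, by omega⟩, by dsimp only; omega⟩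
    · rintro ⟨i, hi⟩
      omega
  rw [hr, Set.ncard_image_of_injective _ hf, Set.ncard_univ, Nat.card_fin]

theorem evenRotation_val {n m : ℕ} (x : Fin (2 * n + 2 * m)) :
    (evenRotation n m x).val =
      if x.val % 2 = 0 then x.val else if x.val + 1 = 2 * n then 1
        else if x.val + 1 = 2 * n + 2 * m then 2 * n + 1 else x.val + 2 := by
  have := x.isLt
  rw [evenRotation, intervalInvolution_inv, mul_apply, intervalInvolution_val, annularGamma_val]
  split_ifs <;> omega

theorem evenLeft_rel_of_evenRotation {n m : ℕ} {r : Setoid (Fin (2 * n + 2 * m))}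
    (h : SameCycle.setoid (evenRotation n m) ≤ r) :
    ∀ u ∈ evenLeft n m, ∀ v ∈ evenLeft n m, r u v := by
  rw [sameCycle_setoid_le_iff] at h
  have key : ∀ i (hi : 2 * i + 1 < 2 * n), r ⟨1, by omega⟩ ⟨2 * i + 1, by omega⟩ := by
    intro i
    induction i with
    | zero => exact fun _ => r.refl' _
    | succ i ih =>
      intro hi
      refine r.trans' (ih (by omega)) ?_
      convert h ⟨2 * i + 1, by omega⟩
      rw [evenRotation_val]
      dsimp only
      split_ifs <;> omega
  have key' : ∀ u ∈ evenLeft n m, ∃ h1 : 1 < 2 * n + 2 * m, r ⟨1, h1⟩ u := by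
    rintro u ⟨hu, hu'⟩
    refine ⟨by omega, ?_⟩
    convert key (u.val / 2) (by omega)
    omega
  intro u hu v hv
  obtain ⟨_, hu⟩ := key' u hu
  obtain ⟨_, hv⟩ := key' v hv
  exact r.trans' (r.symm' hu) hv

theorem evenRight_rel_of_evenRotation {n m : ℕ} {r : Setoid (Fin (2 * n + 2 * m))}
    (h : SameCycle.setoid (evenRotation n m) ≤ r) :
    ∀ u ∈ evenRight n m, ∀ v ∈ evenRight n m, r u v := by
  rw [sameCycle_setoid_le_iff] at h
  have key : ∀ i (hi : 2 * n + 2 * i + 1 < 2 * n + 2 * m),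
      r ⟨2 * n + 1, by omega⟩ ⟨2 * n + 2 * i + 1, hi⟩ := by
    intro i
    induction i with
    | zero => exact fun _ => r.refl' _
    | succ i ih =>
      intro hi
      refine r.trans' (ih (by omega)) ?_
      convert h ⟨2 * n + 2 * i + 1, by omega⟩
      rw [evenRotation_val]
      dsimp only
      split_ifs <;> omega
  have key' : ∀ u ∈ evenRight n m, ∃ h1 : 2 * n + 1 < 2 * n + 2 * m, r ⟨2 * n + 1, h1⟩ u := by
    rintro u ⟨hu, hu'⟩
    refine ⟨by omega, ?_⟩
    convert key ((u.val - 2 * n) / 2) (by omega)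
    omega
  intro u hu v hv
  obtain ⟨_, hu⟩ := key' u hu
  obtain ⟨_, hv⟩ := key' v hv
  exact r.trans' (r.symm' hu) hv

theorem sup_evenRotation_eq_collapse {n m : ℕ} (s : Setoid (Fin (2 * n + 2 * m))) :
    s ⊔ SameCycle.setoid (evenRotation n m) =
      (s.collapse (evenLeft n m)).collapse (evenRight n m) := by
  apply le_antisymm
  · refine sup_le ((Setoid.le_collapse _ _).trans (Setoid.le_collapse _ _)) ?_
    rw [sameCycle_setoid_le_iff]
    intro x
    have hx := evenRotation_val x
    have hlt := x.isLt
    by_cases h0 : x.val % 2 = 0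
    · rw [if_pos h0] at hx
      rw [Fin.ext hx]
    · rw [if_neg h0] at hx
      by_cases hl : x.val < 2 * n
      · refine Setoid.le_collapse _ _ (Setoid.collapse_rel_of_mem _ ?_ ?_)
        · exact ⟨by omega, hl⟩
        · refine ⟨?_, ?_⟩ <;> rw [hx] <;> split_ifs <;> omega
      · refine Setoid.collapse_rel_of_mem _ ?_ ?_
        · exact ⟨by omega, by omega⟩
        · refine ⟨?_, ?_⟩ <;> rw [hx] <;> split_ifs <;> omega
  · exact Setoid.collapse_le_iff.2 ⟨Setoid.collapse_le_iff.2
      ⟨le_sup_left, evenLeft_rel_of_evenRotation le_sup_right⟩,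
      evenRight_rel_of_evenRotation le_sup_right⟩

theorem le_classCount_intervalInvolution (n m : ℕ) :
    n + m ≤ (SameCycle.setoid (intervalInvolution (2 * n + 2 * m))).classCount := by
  let f : Fin (2 * n + 2 * m) → Fin (n + m) := fun x => ⟨x.val / 2, by omega⟩
  have hle : SameCycle.setoid (intervalInvolution (2 * n + 2 * m)) ≤ Setoid.ker f := by
    rw [sameCycle_setoid_le_iff]
    intro x
    have := x.isLt
    simp only [Setoid.ker_def, f, Fin.mk.injEq, intervalInvolution_val]
    split_ifs <;> omega
  have h := Setoid.card_le_classCount _ f ?_ fun x y hxy => hle hxy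
  · rwa [Nat.card_fin] at h
  · intro i
    exact ⟨⟨2 * i.val, by omega⟩, by ext; simp [f]⟩

theorem le_classCount_evenRotation {n m : ℕ} (hn : 1 ≤ n) (hm : 1 ≤ m) :
    n + m + 2 ≤ (SameCycle.setoid (evenRotation n m)).classCount := by
  let f : Fin (2 * n + 2 * m) → Fin (n + m + 2) := fun x =>
    if x.val % 2 = 0 then ⟨x.val / 2, by omega⟩
    else if x.val < 2 * n then ⟨n + m, by omega⟩ else ⟨n + m + 1, by omega⟩
  have hf : ∀ x, (f x).val = if x.val % 2 = 0 then x.val / 2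
      else if x.val < 2 * n then n + m else n + m + 1 := by
    intro x
    simp only [f]
    split_ifs <;> rfl
  have hle : SameCycle.setoid (evenRotation n m) ≤ Setoid.ker f := by
    rw [sameCycle_setoid_le_iff]
    intro x
    have := x.isLt
    have hx := evenRotation_val x
    rw [Setoid.ker_def, Fin.ext_iff, hf, hf]
    split_ifs at hx <;> split_ifs <;> omega
  have h := Setoid.card_le_classCount _ f ?_ fun x y hxy => hle hxy
  · rwa [Nat.card_fin] at h
  · intro i
    obtain hi | hi | hi : i.val < n + m ∨ i.val = n + m ∨ i.val = n + m + 1 := by omega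
    · refine ⟨⟨2 * i.val, by omega⟩, Fin.ext ?_⟩
      rw [hf]
      dsimp only
      split_ifs <;> omega
    · refine ⟨⟨1, by omega⟩, Fin.ext ?_⟩
      rw [hf, if_neg (by norm_num), if_pos (by dsimp only; omega), hi]
    · refine ⟨⟨2 * n + 1, by omega⟩, Fin.ext ?_⟩
      rw [hf]
      dsimp only
      split_ifs <;> omega

/-- For `π` annular non-crossing, `π` and `I` act transitively iff the bipartite graph between the
cycles of `K = π⁻¹ γ` and the two cycles of `γ`, with the even numbers as edges, is acyclic. -/
theorem jointTrans_intervalInvolution_iff_classCount {n m : ℕ} (hn : 1 ≤ n) (hm : 1 ≤ m)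
    {π : Equiv.Perm (Fin (2 * n + 2 * m))} (hπ : AnnularNC (2 * n) (2 * m) π) :
    JointTrans π (intervalInvolution (2 * n + 2 * m)) ↔
      (SameCycle.setoid (π⁻¹ * annularGamma (2 * n) (2 * m)) ⊔
          SameCycle.setoid (evenRotation n m)).classCount + n + m ≤
        (SameCycle.setoid (π⁻¹ * annularGamma (2 * n) (2 * m))).classCount + 2 := by
  obtain ⟨htrans, hcount⟩ := hπ
  rw [cycleCount_eq_classCount, cycleCount_eq_classCount] at hcount
  rw [jointTrans_iff_classCount_le_one] at htrans ⊢
  set I := intervalInvolution (2 * n + 2 * m) with hI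
  set γ := annularGamma (2 * n) (2 * m) with hγ
  set ρ := evenRotation n m with hρ
  have hIρ : I * ρ = γ := mul_inv_cancel_left I γ
  have hIcount : n + m ≤ (SameCycle.setoid I).classCount := le_classCount_intervalInvolution n m
  have hρcount : n + m + 2 ≤ (SameCycle.setoid ρ).classCount := le_classCount_evenRotation hn hm
  have hcard : Nat.card (Fin (2 * n + 2 * m)) = 2 * n + 2 * m := Nat.card_fin _
  have hquot : π⁻¹ * γ * ρ⁻¹ = π⁻¹ * I := by rw [← hIρ]; group
  constructor
  · intro h
    have h1 := classCount_genus_le π I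
    have h2 := Setoid.classCount_le_of_le (setoid_mul_le_sup (π⁻¹ * γ) ρ⁻¹)
    rw [hquot, setoid_inv] at h2
    omega
  · intro h
    have h1 := classCount_sup_mul_le π I ρ
    rw [mul_assoc, hIρ] at h1
    have h2 := classCount_genus_le (π⁻¹ * γ)⁻¹ ρ⁻¹
    rw [inv_inv, hquot, setoid_inv, setoid_inv] at h2
    omega

theorem stmt_4 (n m : ℕ) (hn : 1 ≤ n) (hm : 1 ≤ m)
    (π : Equiv.Perm (Fin (2 * n + 2 * m)))
    (hπ : AnnularNC (2 * n) (2 * m) π) :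
    JointTrans π (intervalInvolution (2 * n + 2 * m)) ↔
      (SeparatesEven (π⁻¹ * annularGamma (2 * n) (2 * m)) ∨
        ∃ r s : Fin (2 * n + 2 * m),
          (r.val + 1) % 2 = 0 ∧ (s.val + 1) % 2 = 0 ∧
          r.val < 2 * n ∧ 2 * n ≤ s.val ∧
          (π⁻¹ * annularGamma (2 * n) (2 * m)).SameCycle r s ∧
          ∀ x y : Fin (2 * n + 2 * m), x ≠ y →
            (x.val + 1) % 2 = 0 → (y.val + 1) % 2 = 0 →
            (π⁻¹ * annularGamma (2 * n) (2 * m)).SameCycle x y →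
            (x = r ∧ y = s) ∨ (x = s ∧ y = r)) := by
  have hleft : (evenLeft n m).Nonempty := ⟨⟨1, by omega⟩, by norm_num, by dsimp only; omega⟩
  have hright : (evenRight n m).Nonempty :=
    ⟨⟨2 * n + 1, by omega⟩, by dsimp only; omega, by dsimp only; omega⟩
  have h := Setoid.classCount_collapse_collapse_iff
    (SameCycle.setoid (π⁻¹ * annularGamma (2 * n) (2 * m))) hleft hright
  rw [Setoid.separates_collapse_iff (disjoint_evenLeft_evenRight n m), ncard_evenLeft,
    ncard_evenRight] at h
  rw [jointTrans_intervalInvolution_iff_classCount hn hm hπ, sup_evenRotation_eq_collapse, h]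
  simp only [mem_evenLeft_union_evenRight]
  refine or_congr ?_ ?_
  · exact ⟨fun h x y hxy hx hy => h x hx y hy hxy, fun h x hx y hy hxy => h x y hxy hx hy⟩
  · constructor
    · rintro ⟨r, ⟨hr, hr'⟩, s, ⟨hs, hs'⟩, hrs, h⟩
      exact ⟨r, s, hr, hs, hr', hs', hrs, fun x y hne hx hy => h x hx y hy hne⟩
    · rintro ⟨r, s, hr, hs, hr', hs', hrs, h⟩
      exact ⟨r, ⟨hr, hr'⟩, s, ⟨hs, hs'⟩, hrs, fun x hx y hy hne => h x y hne hx hy⟩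
end

section
/- Let n, m ≥ 1, set N = 2n+2m and γ = γ_{2n,2m}. Let σ ∈ S_NC(2n,2m) be such that σ separates even numbers and σ has exactly one cycle C intersecting both {1,…,2n} and {2n+1,…,N} (a unique through cycle); assume all elements of C are odd, and set l = |C ∩ {1,…,2n}| and s = |C ∩ {2n+1,…,N}|. Then the graph G_{γσ⁻¹} is bipartite if and only if (1) every cycle of σ consisting entirely of odd numbers has even cardinality, and (2) l and s are both even. -/
open Equiv Module

/-- The functions on `α` which are invariant under the permutation `π`. -/
def invariantFunctions (K : Type*) [Field K] {α : Type*} (π : Perm α) : Submodule K (α → K) where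
  carrier := {f | ∀ x, f (π x) = f x}
  add_mem' hf hg x := by simp [hf x, hg x]
  zero_mem' x := rfl
  smul_mem' c f hf x := by simp [hf x]

theorem mem_invariantFunctions {K : Type*} [Field K] {α : Type*} {π : Perm α} {f : α → K} :
    f ∈ invariantFunctions K π ↔ ∀ x, f (π x) = f x :=
  Iff.rfl

theorem eq_of_sameCycle {α β : Type*} {π : Perm α} {f : α → β} (hf : ∀ x, f (π x) = f x)
    {x y : α} (h : π.SameCycle x y) : f x = f y := by
  obtain ⟨i, rfl⟩ := h
  induction i with
  | zero => rfl
  | succ i ih => rw [add_comm, zpow_add, zpow_one, Perm.mul_apply, hf, ih]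
  | pred i ih =>
    rw [ih, ← hf ((π ^ (-(i : ℤ) - 1)) x), ← Perm.mul_apply, ← zpow_one_add]
    congr 3
    ring

/-- Invariant functions are the functions on the set of cycles. -/
noncomputable def invariantFunctionsEquiv (K : Type*) [Field K] {α : Type*} (π : Perm α) :
    invariantFunctions K π ≃ₗ[K] (Quotient (Perm.SameCycle.setoid π) → K) where
  toFun f := Quotient.lift f.1 fun _ _ h => eq_of_sameCycle f.2 h
  invFun g := ⟨fun x => g ⟦x⟧, fun x => congrArg g
    (Quotient.sound (show π.SameCycle (π x) x from (Perm.SameCycle.refl π x).apply_left))⟩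
  map_add' f g := by
    ext q
    induction q using Quotient.inductionOn
    rfl
  map_smul' c f := by
    ext q
    induction q using Quotient.inductionOn
    rfl
  left_inv f := rfl
  right_inv g := by
    ext q
    induction q using Quotient.inductionOn
    rfl

theorem cycleCount_eq_card_quotient {N : ℕ} (π : Perm (Fin N)) :
    cycleCount π = Nat.card (Quotient (Perm.SameCycle.setoid π)) := by
  symm
  refine Nat.card_congr (Equiv.ofBijective
    (Quotient.lift (fun x => (⟨{y | π.SameCycle x y}, x, rfl⟩ :
      {O : Set (Fin N) | ∃ x, O = {y | π.SameCycle x y}})) ?_) ⟨?_, ?_⟩)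
  · intro a b (h : π.SameCycle a b)
    ext y
    exact ⟨fun hy => h.symm.trans hy, fun hy => h.trans hy⟩
  · intro p q
    induction p using Quotient.inductionOn with | _ a
    induction q using Quotient.inductionOn with | _ b
    intro h
    have h' : {y | π.SameCycle a y} = {y | π.SameCycle b y} := congrArg Subtype.val h
    refine Quotient.sound (show π.SameCycle a b from ?_)
    exact h'.symm.subset (Perm.SameCycle.refl π b)
  · rintro ⟨_, x, rfl⟩
    exact ⟨⟦x⟧, rfl⟩

theorem finrank_invariantFunctions (K : Type*) [Field K] {N : ℕ} (π : Perm (Fin N)) :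
    finrank K (invariantFunctions K π) = cycleCount π := by
  have : Fintype (Quotient (Perm.SameCycle.setoid π)) := Fintype.ofFinite _
  rw [(invariantFunctionsEquiv K π).finrank_eq, finrank_pi, cycleCount_eq_card_quotient,
    Nat.card_eq_fintype_card]

theorem eq_of_jointTrans {β : Type*} {N : ℕ} {σ γ : Perm (Fin N)} (h : JointTrans σ γ)
    {f : Fin N → β} (hσ : ∀ x, f (σ x) = f x) (hγ : ∀ x, f (γ x) = f x) (x y : Fin N) :
    f x = f y := by
  obtain ⟨g, hg, rfl⟩ := h x y
  suffices ∀ z, f (g z) = f z from (this x).symm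
  induction hg using Subgroup.closure_induction with
  | mem g hg =>
    rcases hg with rfl | rfl
    exacts [hσ, hγ]
  | one => exact fun _ => rfl
  | mul a b _ _ ha hb => exact fun z => by rw [Perm.mul_apply, ha, hb]
  | inv a _ ha => exact fun z => by rw [← ha, Perm.inv_def, Equiv.apply_symm_apply]

/-- The vanishing of the first cohomology of the sphere, for the hypermap given by `σ` and `γ`:
a function orthogonal to the cycles of `σ` and to `χ` is a coboundary, where `χ` is the indicator
of one of the cycles of `γ`. -/
theorem exists_potential {K : Type*} [Field K] {N : ℕ} {σ γ : Perm (Fin N)} (htr : JointTrans σ γ)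
    (hcard : cycleCount σ + cycleCount (σ⁻¹ * γ) = N) {χ : Fin N → K}
    (hχγ : ∀ x, χ (γ x) = χ x) (hχσ : χ ∉ invariantFunctions K σ) {w : Fin N → K}
    (hwσ : ∀ g ∈ invariantFunctions K σ, ∑ x, g x * w x = 0) (hwχ : ∑ x, χ x * w x = 0) :
    ∃ f : Fin N → K, (∀ x, f (σ x) = f (γ x)) ∧ ∀ x, f (γ x) = f x + w x := by
  let b : LinearMap.BilinForm K (Fin N → K) := Matrix.toBilin' 1
  have hb : ∀ u v, b u v = ∑ x, u x * v x := fun u v => by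
    simp [b, Matrix.toBilin'_apply', dotProduct]
  have hbn : b.Nondegenerate :=
    LinearMap.BilinForm.nondegenerate_toBilin'_of_det_ne_zero' _ (by simp)
  let W := invariantFunctions K σ ⊔ K ∙ χ
  have hW : cycleCount σ + 1 ≤ finrank K W := by
    have hlt : invariantFunctions K σ < W := by
      refine lt_of_le_of_ne le_sup_left fun h => hχσ ?_
      rw [h]
      exact (le_sup_right : K ∙ χ ≤ W) (Submodule.mem_span_singleton_self χ)
    have := Submodule.finrank_lt_finrank_of_lt hlt
    rwa [finrank_invariantFunctions] at this
  have horth : finrank K (b.orthogonal W) = N - finrank K W := by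
    rw [LinearMap.BilinForm.finrank_orthogonal hbn]
    simp
  have hmem : ∀ v, v ∈ b.orthogonal W ↔
      (∀ g ∈ invariantFunctions K σ, ∑ x, g x * v x = 0) ∧ ∑ x, χ x * v x = 0 := by
    intro v
    constructor
    · intro hv
      exact ⟨fun g hg => (hb g v).symm.trans (hv g ((le_sup_left : _ ≤ W) hg)),
        (hb χ v).symm.trans (hv χ ((le_sup_right : _ ≤ W) (Submodule.mem_span_singleton_self χ)))⟩
    · rintro ⟨h1, h2⟩ u hu
      obtain ⟨g, hg, z, hz, rfl⟩ := Submodule.mem_sup.1 hu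
      obtain ⟨c, rfl⟩ := Submodule.mem_span_singleton.1 hz
      change b (g + c • χ) v = 0
      rw [map_add, map_smul, LinearMap.add_apply, LinearMap.smul_apply, hb, hb, h1 g hg, h2]
      simp
  let d : invariantFunctions K (σ⁻¹ * γ) →ₗ[K] (Fin N → K) :=
    { toFun := fun u x => u.1 x - u.1 (σ⁻¹ x)
      map_add' := fun u v => by ext x; simp; ring
      map_smul' := fun c u => by ext x; simp; ring }
  have hu : ∀ u : invariantFunctions K (σ⁻¹ * γ), ∀ x, u.1 (σ⁻¹ (γ x)) = u.1 x := fun u => u.2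
  have hle : LinearMap.range d ≤ b.orthogonal W := by
    rintro _ ⟨u, rfl⟩
    rw [hmem]
    have key : ∀ (π : Perm (Fin N)) (g : Fin N → K), (∀ x, g (π x) = g x) →
        (∀ x, u.1 (σ⁻¹ (π x)) = u.1 x) → ∑ x, g x * d u x = 0 := by
      intro π g hg hπ
      have : ∑ x, g x * u.1 x = ∑ x, g x * u.1 (σ⁻¹ x) := by
        rw [← Equiv.sum_comp π (fun x => g x * u.1 (σ⁻¹ x))]
        exact Finset.sum_congr rfl fun x _ => by rw [hg, hπ]
      simp only [d, LinearMap.coe_mk, AddHom.coe_mk, mul_sub, Finset.sum_sub_distrib, this, sub_self]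
    exact ⟨fun g hg => key σ g hg fun x => congrArg u.1 (σ.symm_apply_apply x), key γ χ hχγ (hu u)⟩
  have hker : finrank K (LinearMap.ker d) ≤ 1 := by
    rcases Nat.eq_zero_or_pos N with rfl | hN
    · exact absurd (fun x => x.elim0) hχσ
    refine finrank_le_one (⟨⟨fun _ => 1, fun _ => rfl⟩, ?_⟩ : LinearMap.ker d) ?_
    · rw [LinearMap.mem_ker]
      ext x
      simp [d]
    · rintro ⟨u, hud⟩
      have h1 : ∀ x, u.1 (σ⁻¹ x) = u.1 x := fun x =>
        (sub_eq_zero.1 (congrFun (LinearMap.mem_ker.1 hud) x)).symm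
      have h2 : ∀ x, u.1 (σ x) = u.1 x := fun x =>
        (h1 (σ x)).symm.trans (congrArg u.1 (σ.symm_apply_apply x))
      have h3 : ∀ x, u.1 (γ x) = u.1 x := fun x => by rw [← h1 (γ x), hu]
      refine ⟨u.1 ⟨0, hN⟩, Subtype.ext (Subtype.ext (funext fun x => ?_))⟩
      simpa using eq_of_jointTrans htr h2 h3 ⟨0, hN⟩ x
  have hrk := LinearMap.finrank_range_add_finrank_ker d
  rw [finrank_invariantFunctions] at hrk
  have heq : LinearMap.range d = b.orthogonal W :=
    Submodule.eq_of_le_of_finrank_le hle (by omega)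
  obtain ⟨u, hw⟩ : w ∈ LinearMap.range d := by
    rw [heq, hmem]
    exact ⟨hwσ, hwχ⟩
  refine ⟨fun x => u.1 (σ⁻¹ x), fun x => ?_, fun x => ?_⟩
  · exact (congrArg u.1 (σ.symm_apply_apply x)).trans (hu u x).symm
  · simp only [← hw, hu, d, LinearMap.coe_mk, AddHom.coe_mk, add_sub_cancel]

theorem sum_eq_zero_of_cycles {K α : Type*} [AddCommMonoid K] [Fintype α] {π : Perm α} {h : α → K}
    [∀ x, DecidablePred (π.SameCycle x)] (H : ∀ x, ∑ y with π.SameCycle x y, h y = 0) : ∑ y, h y = 0 := by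
  classical
  rw [← Finset.sum_fiberwise Finset.univ (fun y => (⟦y⟧ : Quotient (Perm.SameCycle.setoid π))) h]
  refine Finset.sum_eq_zero fun q _ => ?_
  induction q using Quotient.inductionOn with | _ x
  rw [← H x]
  refine Finset.sum_congr (Finset.filter_congr fun y _ => ?_) fun _ _ => rfl
  exact Quotient.eq.trans ⟨Perm.SameCycle.symm, Perm.SameCycle.symm⟩

theorem annularGamma_castAdd {p q : ℕ} (x : Fin p) :
    annularGamma p q (Fin.castAdd q x) = Fin.castAdd q (finRotate p x) := by
  simp [annularGamma, Equiv.permCongr_apply]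

theorem annularGamma_natAdd {p q : ℕ} (x : Fin q) :
    annularGamma p q (Fin.natAdd p x) = Fin.natAdd p (finRotate q x) := by
  simp [annularGamma, Equiv.permCongr_apply]

theorem annularGamma_lt_iff {p q : ℕ} (x : Fin (p + q)) :
    (annularGamma p q x).val < p ↔ x.val < p := by
  induction x using Fin.addCases with
  | left x => simp [annularGamma_castAdd]
  | right x => simp [annularGamma_natAdd]

theorem annularGamma_of_even {n m : ℕ} {x : Fin (2 * n + 2 * m)} (hx : x.val % 2 = 0) :
    (annularGamma (2 * n) (2 * m) x).val = x.val + 1 := by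
  have key : ∀ (k : ℕ) (y : Fin (2 * k)), y.val % 2 = 0 → (finRotate (2 * k) y).val = y.val + 1 := by
    intro k y hy
    obtain ⟨j, hj⟩ : ∃ j, 2 * k = j + 1 := ⟨2 * k - 1, by have := y.2; omega⟩
    have hlt : y.val < j := by have := y.2; omega
    generalize 2 * k = K at *
    subst hj
    exact coe_finRotate_of_ne_last fun h => by simp [h] at hlt
  induction x using Fin.addCases with
  | left x =>
    rw [annularGamma_castAdd]
    simpa using key n x hx
  | right x =>
    rw [annularGamma_natAdd]
    simp only [Fin.val_natAdd] at hx ⊢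
    rw [key m x (by omega)]
    omega

theorem bipartSet_iff {n m : ℕ} {π : Perm (Fin (2 * n + 2 * m))} {A : Set (Fin (2 * n + 2 * m))} :
    BipartSet π A ↔ (∀ x, π x ∈ A ↔ x ∈ A) ∧ ∀ x : Fin (2 * n + 2 * m), x.val % 2 = 0 →
      (annularGamma (2 * n) (2 * m) x ∈ A ↔ x ∉ A) := by
  refine and_congr ⟨fun h x => ?_, fun h => ?_⟩ ⟨fun h x hx => ?_, fun h i hi => ?_⟩
  · conv_lhs => rw [← h]
    exact π.injective.mem_set_image
  · ext y
    constructor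
    · rintro ⟨x, hx, rfl⟩
      exact (h x).2 hx
    · intro hy
      refine ⟨π⁻¹ y, (h _).1 ?_, ?_⟩ <;> simp [hy]
  · have hlt := (annularGamma (2 * n) (2 * m) x).2
    rw [annularGamma_of_even hx] at hlt
    have := h (x.val / 2) (by omega)
    have e1 : (⟨2 * (x.val / 2), by omega⟩ : Fin (2 * n + 2 * m)) = x := Fin.ext (by simp; omega)
    have e2 : (⟨2 * (x.val / 2) + 1, by omega⟩ : Fin (2 * n + 2 * m)) =
        annularGamma (2 * n) (2 * m) x := Fin.ext (by rw [annularGamma_of_even hx]; simp; omega)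
    rw [e1, e2] at this
    simp only [Xor', xor_def] at this
    tauto
  · have hx := h ⟨2 * i, by omega⟩ (by simp)
    have e2 : annularGamma (2 * n) (2 * m) ⟨2 * i, by omega⟩ = ⟨2 * i + 1, hi⟩ :=
      Fin.ext (annularGamma_of_even (by simp))
    rw [e2] at hx
    simp only [Xor', xor_def]
    tauto

/-- Bipartiteness of `G_{γσ⁻¹}` in terms of functions with values in `ZMod 2`. -/
theorem graphBipartite_iff {n m : ℕ} {σ : Perm (Fin (2 * n + 2 * m))} :
    GraphBipartite (annularGamma (2 * n) (2 * m) * σ⁻¹) ↔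
      ∃ f : Fin (2 * n + 2 * m) → ZMod 2,
        (∀ x, f (σ x) = f (annularGamma (2 * n) (2 * m) x)) ∧
        ∀ x, x.val % 2 = 0 → f (annularGamma (2 * n) (2 * m) x) = f x + 1 := by
  classical
  constructor
  · rintro ⟨A, hA⟩
    rw [bipartSet_iff] at hA
    refine ⟨fun x => if x ∈ A then 1 else 0, fun x => ?_, fun x hx => ?_⟩
    · have := hA.1 (σ x)
      simp only [Perm.mul_apply, Perm.inv_def, Equiv.symm_apply_apply] at this
      simp only [this]
    · simp only [hA.2 x hx]
      by_cases h : x ∈ A <;> simp [h]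
      all_goals decide
  · rintro ⟨f, h1, h2⟩
    refine ⟨{x | f x = 1}, bipartSet_iff.2 ⟨fun x => ?_, fun x hx => ?_⟩⟩
    · have := h1 (σ⁻¹ x)
      rw [show σ (σ⁻¹ x) = x from σ.apply_symm_apply x] at this
      simp only [Set.mem_ofPred_eq, Perm.mul_apply, this]
    · simp only [Set.mem_ofPred_eq, h2 x hx]
      generalize f x = a
      revert a
      decide

theorem natCast_ncard_eq_sum {α : Type*} [Fintype α] (p : α → Prop) [DecidablePred p] :
    ((Set.ncard {y | p y} : ℕ) : ZMod 2) = ∑ y with p y, 1 := by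
  rw [Set.ncard_eq_toFinset_card']
  simp

theorem sum_cycle_coboundary {α K : Type*} [Fintype α] [AddCommGroup K] (σ : Perm α) (f : α → K)
    (x : α) [DecidablePred (σ.SameCycle x)] :
    ∑ y with σ.SameCycle x y, (f (σ y) - f y) = 0 := by
  rw [Finset.sum_sub_distrib, sub_eq_zero]
  refine Finset.sum_equiv σ (fun y => ?_) fun _ _ => rfl
  simp [Perm.sameCycle_apply_right]

theorem stmt_6 (n m : ℕ) (hn : 1 ≤ n) (hm : 1 ≤ m)
    (σ : Equiv.Perm (Fin (2 * n + 2 * m)))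
    (hσ : AnnularNC (2 * n) (2 * m) σ)
    (hsep : SeparatesEven σ)
    (x0 : Fin (2 * n + 2 * m))
    (hthru : (∃ y, σ.SameCycle x0 y ∧ y.val < 2 * n) ∧
      (∃ y, σ.SameCycle x0 y ∧ 2 * n ≤ y.val))
    (huniq : ∀ x : Fin (2 * n + 2 * m),
      ((∃ y, σ.SameCycle x y ∧ y.val < 2 * n) ∧
        (∃ y, σ.SameCycle x y ∧ 2 * n ≤ y.val)) → σ.SameCycle x0 x)
    (hodd : ∀ y : Fin (2 * n + 2 * m), σ.SameCycle x0 y → (y.val + 1) % 2 = 1)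
    (l s : ℕ)
    (hl : l = Set.ncard {y | σ.SameCycle x0 y ∧ y.val < 2 * n})
    (hs : s = Set.ncard {y | σ.SameCycle x0 y ∧ 2 * n ≤ y.val}) :
    GraphBipartite (annularGamma (2 * n) (2 * m) * σ⁻¹) ↔
      ((∀ x : Fin (2 * n + 2 * m),
        (∀ y : Fin (2 * n + 2 * m), σ.SameCycle x y → (y.val + 1) % 2 = 1) →
        Even (Set.ncard {y | σ.SameCycle x y})) ∧ Even l ∧ Even s) := by
  classical
  set γ := annularGamma (2 * n) (2 * m) with hγ
  have hcycle : ∀ x, ¬ σ.SameCycle x0 x → ∀ y, σ.SameCycle x y →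
      (y.val < 2 * n ↔ x.val < 2 * n) := by
    intro x hx y hxy
    have := fun h => hx (huniq x h)
    by_contra hne
    refine this ?_
    by_cases hx' : x.val < 2 * n
    · exact ⟨⟨x, .refl _ _, hx'⟩, y, hxy, by omega⟩
    · exact ⟨⟨y, hxy, by omega⟩, x, .refl _ _, by omega⟩
  have hls : Set.ncard {y | σ.SameCycle x0 y} = l + s := by
    rw [hl, hs, ← Set.ncard_union_eq]
    · congr 1
      ext y
      simp only [Set.mem_ofPred_eq, Set.mem_union]
      have := Nat.lt_or_ge y.val (2 * n)
      tauto
    · exact Set.disjoint_left.2 fun y hy hy' => absurd hy.2 (not_lt.2 hy'.2)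
  let χ : Fin (2 * n + 2 * m) → ZMod 2 := fun x => if x.val < 2 * n then 1 else 0
  have hχγ : ∀ x, χ (γ x) = χ x := fun x => by simp only [χ, hγ, annularGamma_lt_iff]
  have hχcycle : ∀ x, ¬ σ.SameCycle x0 x → ∀ w : Fin (2 * n + 2 * m) → ZMod 2,
      ∑ y with σ.SameCycle x y, χ y * w y = χ x * ∑ y with σ.SameCycle x y, w y := by
    intro x hx w
    rw [Finset.mul_sum]
    refine Finset.sum_congr rfl fun y hy => ?_
    simp only [χ, hcycle x hx y (by simpa using hy)]
  have hχ0 : ∀ w : Fin (2 * n + 2 * m) → ZMod 2, (∀ y, y.val % 2 = 0 → w y = 1) → ∀ x,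
      σ.SameCycle x0 x → ∑ y with σ.SameCycle x y, χ y * w y = l := by
    intro w hw x hx
    rw [hl, natCast_ncard_eq_sum, ← Finset.filter_filter,
      Finset.sum_filter (fun y : Fin (2 * n + 2 * m) => y.val < 2 * n)]
    refine Finset.sum_congr (Finset.filter_congr fun y _ => ?_) fun y hy => ?_
    · exact ⟨hx.trans, hx.symm.trans⟩
    · have := hodd y (by simpa using hy)
      simp [χ, hw y (by omega)]
  rw [graphBipartite_iff, ← hγ]
  constructor
  · rintro ⟨f, hf1, hf2⟩
    have hall : ∀ x : Fin (2 * n + 2 * m),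
        (∀ y : Fin (2 * n + 2 * m), σ.SameCycle x y → (y.val + 1) % 2 = 1) →
        Even (Set.ncard {y | σ.SameCycle x y}) := by
      intro x hx
      rw [← ZMod.natCast_eq_zero_iff_even, natCast_ncard_eq_sum, ← sum_cycle_coboundary σ f x]
      refine Finset.sum_congr rfl fun y hy => ?_
      have := hx y (by simpa using hy)
      rw [hf1, hf2 y (by omega), add_sub_cancel_left]
    have hl' : Even l := by
      let w : Fin (2 * n + 2 * m) → ZMod 2 := fun y => f (γ y) - f y
      have htot : ∑ y, χ y * w y = 0 := by
        simp only [w, mul_sub, Finset.sum_sub_distrib, sub_eq_zero]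
        rw [← Equiv.sum_comp γ (fun y => χ y * f y)]
        simp only [hχγ]
      have hsplit := Finset.sum_filter_add_sum_filter_not Finset.univ (σ.SameCycle x0)
        (fun y => χ y * w y)
      rw [htot, hχ0 w (fun y hy => by simp only [w, hf2 y hy, add_sub_cancel_left]) x0 (.refl _ _),
        Finset.sum_filter] at hsplit
      rw [sum_eq_zero_of_cycles (π := σ), add_zero, ZMod.natCast_eq_zero_iff_even] at hsplit
      · exact hsplit
      intro x
      by_cases hx : σ.SameCycle x0 x
      · refine Finset.sum_eq_zero fun y hy => if_neg ?_
        exact not_not.2 (hx.trans (by simpa using hy))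
      · have hz : ∑ y with σ.SameCycle x y, w y = 0 := by
          simp only [w, ← hf1]
          exact sum_cycle_coboundary σ f x
        rw [← mul_zero (χ x), ← hz, ← hχcycle x hx]
        refine Finset.sum_congr rfl fun y hy => if_pos fun h => hx ?_
        exact h.trans (Perm.SameCycle.symm (by simpa using hy))
    refine ⟨hall, hl', ?_⟩
    have := hall x0 hodd
    rw [hls] at this
    exact (Nat.even_add.1 this).1 hl'
  · rintro ⟨hall, hl', -⟩
    let w : Fin (2 * n + 2 * m) → ZMod 2 := fun y =>
      if y.val % 2 = 0 then 1 else ∑ z with σ.SameCycle y z ∧ z ≠ y, 1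
    have hw1 : ∀ y, y.val % 2 = 0 → w y = 1 := fun y hy => if_pos hy
    have hw : ∀ x, ∑ y with σ.SameCycle x y, w y = 0 := by
      intro x
      by_cases hx : ∀ y : Fin (2 * n + 2 * m), σ.SameCycle x y → (y.val + 1) % 2 = 1
      · rw [← (ZMod.natCast_eq_zero_iff_even).2 (hall x hx), natCast_ncard_eq_sum]
        refine Finset.sum_congr rfl fun y hy => hw1 y ?_
        have := hx y (by simpa using hy)
        omega
      · push Not at hx
        obtain ⟨e, hxe, he⟩ := hx
        rw [← Finset.add_sum_erase _ _ (show e ∈ _ by simpa using hxe)]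
        have h1 : ∑ y ∈ (Finset.univ.filter (σ.SameCycle x)).erase e, w y =
            ∑ z with σ.SameCycle e z ∧ z ≠ e, 1 := by
          refine Finset.sum_congr ?_ fun y hy => hw1 y ?_
          · ext y
            have : σ.SameCycle x y ↔ σ.SameCycle e y := ⟨hxe.symm.trans, hxe.trans⟩
            simp [this, and_comm]
          · by_contra hy'
            have hy2 : σ.SameCycle e y ∧ y ≠ e := by simpa using hy
            exact hy2.2 (hsep e y hy2.1 (by omega) (by omega)).symm
        rw [h1, show w e = _ from if_neg (by omega)]
        exact CharTwo.add_self_eq_zero _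
    have hχσ : χ ∉ invariantFunctions (ZMod 2) σ := by
      intro h
      obtain ⟨⟨a, ha, ha'⟩, b, hb, hb'⟩ := hthru
      have := eq_of_sameCycle h (ha.symm.trans hb)
      simp [χ, ha', not_lt.2 hb'] at this
    have hwσ : ∀ g ∈ invariantFunctions (ZMod 2) σ, ∑ x, g x * w x = 0 := by
      intro g hg
      refine sum_eq_zero_of_cycles (π := σ) fun x => ?_
      rw [← mul_zero (g x), ← hw x, Finset.mul_sum]
      refine Finset.sum_congr rfl fun y hy => ?_
      rw [eq_of_sameCycle hg (show σ.SameCycle x y by simpa using hy)]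
    have hwχ : ∑ x, χ x * w x = 0 := by
      refine sum_eq_zero_of_cycles (π := σ) fun x => ?_
      by_cases hx : σ.SameCycle x0 x
      · rw [hχ0 w hw1 x hx]
        exact (ZMod.natCast_eq_zero_iff_even).2 hl'
      · rw [hχcycle x hx, hw, mul_zero]
    obtain ⟨f, hf1, hf2⟩ := exists_potential hσ.1 hσ.2 hχγ hχσ hwσ hwχ
    exact ⟨f, hf1, fun x hx => by rw [← hw1 x hx]; exact hf2 x⟩
end

section
/- Let n, m ≥ 1. The number of fixed-point-free involutions π belonging to J_{2n,2m} equals (n+m−1)!/((n−1)!(m−1)!) = m·binom(n+m−1, n−1) if n+m is even, and equals 0 if n+m is odd. -/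
namespace AnnularPairing

open Equiv

variable {B : Type*}

open Classical in
/-- The first point of the forward orbit `x, ρ x, ρ² x, …` lying in `R` (or `x` if there is none). -/
noncomputable def firstHit (ρ : Perm B) (R : Set B) (x : B) : B :=
  if h : ∃ k : ℕ, (ρ ^ k) x ∈ R then (ρ ^ Nat.find h) x else x

section FirstHit

variable {ρ : Perm B} {R : Set B}

lemma exists_firstHit_eq (x : B) : ∃ k : ℕ, firstHit ρ R x = (ρ ^ k) x := by
  unfold firstHit
  split_ifs with h
  · exact ⟨_, rfl⟩
  · exact ⟨0, rfl⟩

lemma firstHit_mem (H : ∀ x, ∃ k : ℕ, (ρ ^ k) x ∈ R) (x : B) : firstHit ρ R x ∈ R := by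
  classical
  unfold firstHit
  rw [dif_pos (H x)]
  exact Nat.find_spec (H x)

lemma firstHit_of_mem {x : B} (hx : x ∈ R) : firstHit ρ R x = x := by
  classical
  have h : ∃ k : ℕ, (ρ ^ k) x ∈ R := ⟨0, hx⟩
  have h0 : Nat.find h = 0 := (Nat.find_eq_zero h).2 hx
  unfold firstHit
  rw [dif_pos h, h0]
  rfl

lemma firstHit_apply_of_notMem (H : ∀ x, ∃ k : ℕ, (ρ ^ k) x ∈ R) {x : B} (hx : x ∉ R) :
    firstHit ρ R (ρ x) = firstHit ρ R x := by
  classical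
  unfold firstHit
  rw [dif_pos (H x), dif_pos (H _)]
  have h2 : ∃ k : ℕ, (ρ ^ (k + 1)) x ∈ R := by
    obtain ⟨k, hk⟩ := H (ρ x)
    exact ⟨k, by rwa [pow_succ, Perm.mul_apply]⟩
  rw [Nat.find_comp_succ (H x) h2 (by simpa using hx), pow_succ, Perm.mul_apply]
  congr 3

lemma color_firstHit {c : B → Bool} (hc : ∀ x, c (ρ x) = c x) (x : B) :
    c (firstHit ρ R x) = c x := by
  obtain ⟨k, hk⟩ := exists_firstHit_eq (ρ := ρ) (R := R) x
  rw [hk]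
  clear hk
  induction k with
  | zero => rfl
  | succ k ih => rw [pow_succ', Perm.mul_apply, hc, ih]

lemma eq_of_firstHit_apply_eq (H : ∀ x, ∃ k : ℕ, (ρ ^ k) x ∈ R) {x y : B} (hx : x ∈ R) (hy : y ∈ R)
    (h : firstHit ρ R (ρ x) = firstHit ρ R (ρ y)) : x = y := by
  classical
  unfold firstHit at h
  rw [dif_pos (H _), dif_pos (H _)] at h
  wlog hle : Nat.find (H (ρ x)) ≤ Nat.find (H (ρ y)) generalizing x y
  · exact (this hy hx h.symm (le_of_not_ge hle)).symm
  obtain ⟨d, hd⟩ := Nat.exists_eq_add_of_le hle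
  rw [hd, pow_add, Perm.mul_apply, EmbeddingLike.apply_eq_iff_eq, ← Perm.mul_apply _ ρ,
    ← pow_succ, pow_succ', Perm.mul_apply, EmbeddingLike.apply_eq_iff_eq] at h
  rcases d with _ | d
  · exact h
  · have hmin : d < Nat.find (H (ρ y)) := by omega
    refine absurd ?_ (Nat.find_min (H (ρ y)) hmin)
    rw [← Perm.mul_apply, ← pow_succ, ← h]
    exact hx

/-- A property stable under first return to `R` spreads along `ρ`-orbits inside `R`. -/
lemma forall_of_firstReturn (H : ∀ x, ∃ k : ℕ, (ρ ^ k) x ∈ R) {Q : B → Prop} {x y : B}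
    (hx : x ∈ R) (hy : y ∈ R) (hxy : ∃ k : ℕ, (ρ ^ k) x = y) (hQ : Q x)
    (hstep : ∀ z ∈ R, Q z → Q (firstHit ρ R (ρ z))) : Q y := by
  obtain ⟨k, rfl⟩ := hxy
  rw [← firstHit_of_mem (ρ := ρ) hy]
  clear hy
  induction k with
  | zero => rwa [pow_zero, Perm.one_apply, firstHit_of_mem hx]
  | succ k ih =>
    rw [pow_succ', Perm.mul_apply]
    by_cases hk : (ρ ^ k) x ∈ R
    · rw [firstHit_of_mem hk] at ih
      exact hstep _ hk ih
    · rwa [firstHit_apply_of_notMem H hk]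

end FirstHit

/-- The double of `ρ` on `B × Bool`: it alternates between odd points `(i, false)` and even points
`(i, true)`, visiting `(i, false), (i, true), (ρ i, false), (ρ i, true), …`. -/
def doubled (ρ : Perm B) : Perm (B × Bool) where
  toFun x := if x.2 then (ρ x.1, false) else (x.1, true)
  invFun x := if x.2 then (x.1, false) else (ρ.symm x.1, true)
  left_inv := by rintro ⟨i, _ | _⟩ <;> simp
  right_inv := by rintro ⟨i, _ | _⟩ <;> simp

@[simp] lemma doubled_true (ρ : Perm B) (i : B) : doubled ρ (i, true) = (ρ i, false) := rfl

@[simp] lemma doubled_false (ρ : Perm B) (i : B) : doubled ρ (i, false) = (i, true) := rfl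

/-- Pairings of `B × Bool` joining the two colour classes, such that every cycle of
`π⁻¹ * doubled ρ` contains exactly one even point. -/
structure IsEvenPairing (ρ : Perm B) (c : B → Bool) (π : Perm (B × Bool)) : Prop where
  invol : ∀ x, π (π x) = x
  ne : ∀ x, π x ≠ x
  sep : ∀ i j, (π⁻¹ * doubled ρ).SameCycle (i, true) (j, true) → i = j
  meets : ∀ j, ∃ i, (π⁻¹ * doubled ρ).SameCycle (j, false) (i, true)
  cross : ∃ x, c (π x).1 ≠ c x.1

/-- Nontrivial involutions whose moved points change colour, and which conjugate the first-return
map on their support to its inverse. -/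
structure IsReflection (ρ : Perm B) (c : B → Bool) (a : Perm B) : Prop where
  invol : ∀ i, a (a i) = i
  nontriv : ∃ i, a i ≠ i
  color : ∀ i, a i ≠ i → c (a i) ≠ c i
  rev : ∀ i, a i ≠ i →
    a (firstHit ρ {j | a j ≠ j} (ρ (a (firstHit ρ {j | a j ≠ j} (ρ i))))) = i

/-- The involution of even points induced by `π`, fixing those that `π` sends to odd points. -/
def evenPart (π : Perm (B × Bool)) (h : ∀ x, π (π x) = x) : Perm B :=
  Function.Involutive.toPerm (fun i => if (π (i, true)).2 then (π (i, true)).1 else i) (by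
    intro i
    rcases hi : π (i, true) with ⟨j, _ | _⟩
    · simp [hi]
    · have := h (i, true)
      rw [hi] at this
      simp [hi, this])

lemma evenPart_apply (π : Perm (B × Bool)) (h : ∀ x, π (π x) = x) (i : B) :
    evenPart π h i = if (π (i, true)).2 then (π (i, true)).1 else i := rfl

lemma sameCycle_firstHit {ρ : Perm B} {R : Set B} {π : Perm (B × Bool)} {a : B → B}
    (hinv : ∀ x, π (π x) = x) (hR : ∀ i ∈ R, π (i, true) = (a i, true))
    (hR' : ∀ i ∉ R, π (i, true) = (ρ i, false)) (H : ∀ x, ∃ k : ℕ, (ρ ^ k) x ∈ R) (j : B) :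
    (π⁻¹ * doubled ρ).SameCycle (j, false) (a (firstHit ρ R j), true) := by
  have hs : ∀ x, (π⁻¹ * doubled ρ) x = π (doubled ρ x) := fun x => by
    rw [Perm.mul_apply, Perm.inv_eq_iff_eq, hinv]
  obtain ⟨k, hk⟩ := H j
  induction k generalizing j with
  | zero =>
    replace hk : j ∈ R := hk
    rw [firstHit_of_mem hk, ← hR j hk, ← doubled_false ρ, ← hs, Perm.sameCycle_apply_right]
  | succ k ih =>
    by_cases hj : j ∈ R
    · rw [firstHit_of_mem hj, ← hR j hj, ← doubled_false ρ, ← hs, Perm.sameCycle_apply_right]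
    · rw [pow_succ, Perm.mul_apply] at hk
      rw [← firstHit_apply_of_notMem H hj, ← Perm.sameCycle_apply_left, hs, doubled_false,
        hR' j hj]
      exact ih _ hk

section EvenPairing

variable {ρ : Perm B} {c : B → Bool} {π : Perm (B × Bool)}

namespace IsEvenPairing

lemma inv_mul_apply (h : IsEvenPairing ρ c π) (x : B × Bool) :
    (π⁻¹ * doubled ρ) x = π (doubled ρ x) := by
  rw [Perm.mul_apply, Perm.inv_eq_iff_eq, h.invol]

lemma odd_eq_or (h : IsEvenPairing ρ c π) (i : B) :
    π (ρ i, false) = (i, true) ∨ (π (ρ i, false)).2 = false := by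
  rcases hi : π (ρ i, false) with ⟨j, _ | _⟩
  · exact Or.inr rfl
  · left
    rw [h.sep i j]
    rw [← hi, ← doubled_true, ← h.inv_mul_apply, Perm.sameCycle_apply_right]

lemma evenPart_eq_self_iff (h : IsEvenPairing ρ c π) (i : B) :
    evenPart π h.invol i = i ↔ π (i, true) = (ρ i, false) := by
  rw [evenPart_apply]
  rcases hi : π (i, true) with ⟨j, _ | _⟩
  · simp only [Bool.false_eq_true, if_false, true_iff]
    have h1 := h.invol (i, true)
    rw [hi] at h1
    have h2 := h.odd_eq_or (ρ.symm j)
    rw [Equiv.apply_symm_apply, h1] at h2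
    rcases h2 with h2 | h2
    · have h3 : i = ρ.symm j := congrArg Prod.fst h2
      rw [h3, Equiv.apply_symm_apply]
    · simp at h2
  · simp only [if_true, Prod.mk.injEq, Bool.true_eq_false, and_false, iff_false]
    rintro rfl
    exact h.ne _ hi

lemma apply_true (h : IsEvenPairing ρ c π) {i : B} (hi : evenPart π h.invol i ≠ i) :
    π (i, true) = (evenPart π h.invol i, true) := by
  rw [evenPart_apply] at hi ⊢
  rcases hj : π (i, true) with ⟨j, _ | _⟩
  · simp [hj] at hi
  · simp

lemma exists_pow_mem (h : IsEvenPairing ρ c π) [Finite B] (x : B) :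
    ∃ k : ℕ, (ρ ^ k) x ∈ {j | evenPart π h.invol j ≠ j} := by
  by_contra! hcon
  obtain ⟨i, hi⟩ := h.meets x
  obtain ⟨k, hk⟩ := hi.exists_nat_pow_eq
  have key : ∀ k : ℕ, ((π⁻¹ * doubled ρ) ^ k) (x, false) = ((ρ ^ k) x, false) := by
    intro k
    induction k with
    | zero => rfl
    | succ k ih =>
      rw [pow_succ', Perm.mul_apply, ih, h.inv_mul_apply, doubled_false,
        (h.evenPart_eq_self_iff _).1 (not_not.1 (hcon k)), pow_succ', Perm.mul_apply]
  rw [key] at hk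
  simp at hk

/-- The first-return relation attached to a pairing between odd points. -/
lemma firstHit_eq (h : IsEvenPairing ρ c π) [Finite B] {i j : B}
    (hij : π (ρ i, false) = (ρ j, false)) :
    evenPart π h.invol (firstHit ρ {j | evenPart π h.invol j ≠ j} (ρ j)) = i := by
  refine (h.sep _ _ ?_).symm
  have h1 := sameCycle_firstHit (R := {j | evenPart π h.invol j ≠ j})
    (a := evenPart π h.invol) h.invol (fun i hi => h.apply_true hi)
    (fun i hi => (h.evenPart_eq_self_iff i).1 (not_not.1 hi)) h.exists_pow_mem (ρ j)
  rwa [← hij, ← doubled_true, ← h.inv_mul_apply, Perm.sameCycle_apply_left] at h1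

lemma exists_odd_partner (h : IsEvenPairing ρ c π) {i : B} (hi : evenPart π h.invol i ≠ i) :
    ∃ j, π (ρ i, false) = (ρ j, false) := by
  rcases h.odd_eq_or i with h1 | h1
  · refine absurd ((h.evenPart_eq_self_iff i).2 ?_) hi
    rw [← h1, h.invol]
  · exact ⟨ρ.symm (π (ρ i, false)).1, by
      rw [Equiv.apply_symm_apply]; exact Prod.ext rfl h1⟩

lemma apply_false (h : IsEvenPairing ρ c π) [Finite B] {i : B}
    (hi : evenPart π h.invol i ≠ i) :
    π (ρ i, false) =
      (ρ (evenPart π h.invol (firstHit ρ {j | evenPart π h.invol j ≠ j} (ρ i))), false) := by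
  obtain ⟨j, hj⟩ := h.exists_odd_partner hi
  rw [h.firstHit_eq (i := j) (j := i) (by rw [← hj, h.invol]), hj]

lemma evenPart_rev (h : IsEvenPairing ρ c π) [Finite B] {i : B}
    (hi : evenPart π h.invol i ≠ i) :
    evenPart π h.invol (firstHit ρ {j | evenPart π h.invol j ≠ j} (ρ (evenPart π h.invol
      (firstHit ρ {j | evenPart π h.invol j ≠ j} (ρ i))))) = i :=
  h.firstHit_eq (h.apply_false hi)

lemma isReflection (h : IsEvenPairing ρ c π) [Finite B] (hc : ∀ x, c (ρ x) = c x)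
    (ht : ∀ x y, c x = c y → ∃ k : ℕ, (ρ ^ k) x = y) :
    IsReflection ρ c (evenPart π h.invol) := by
  set a := evenPart π h.invol with ha
  set R := {j | a j ≠ j} with hRdef
  have hinv : ∀ i, a (a i) = i := Function.Involutive.toPerm_involutive _
  have haR : ∀ i ∈ R, a i ∈ R := fun i hi => by
    simpa [hRdef, hinv] using Ne.symm hi
  have H : ∀ x, ∃ k : ℕ, (ρ ^ k) x ∈ R := h.exists_pow_mem
  have hcr : ∀ x, c (firstHit ρ R (ρ x)) = c x := fun x => by rw [color_firstHit hc, hc]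
  -- the property of changing colour propagates along first returns
  have hstep : ∀ z ∈ R, c (a z) ≠ c z →
      c (a (firstHit ρ R (ρ z))) ≠ c (firstHit ρ R (ρ z)) := by
    intro z hz hcz
    have h1 : a (firstHit ρ R (ρ (a (firstHit ρ R (ρ z))))) = z := h.evenPart_rev hz
    have h2 : firstHit ρ R (ρ (a (firstHit ρ R (ρ z)))) = a z := by rw [← h1, hinv, h1]
    have h3 := hcr (a (firstHit ρ R (ρ z)))
    rw [h2] at h3
    rwa [← h3, hcr]
  obtain ⟨z, hz, hcz⟩ : ∃ z ∈ R, c (a z) ≠ c z := by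
    obtain ⟨⟨x, _ | _⟩, hx⟩ := h.cross
    · by_cases hi : a (ρ.symm x) = ρ.symm x
      · have h1 := (h.evenPart_eq_self_iff _).1 hi
        rw [Equiv.apply_symm_apply] at h1
        rw [← h1, h.invol, h1, ← hc (ρ.symm x)] at hx
        simp at hx
      · have h1 := h.apply_false hi
        rw [Equiv.apply_symm_apply] at h1
        rw [h1, hc] at hx
        refine ⟨firstHit ρ R x, firstHit_mem H _, ?_⟩
        rwa [color_firstHit hc]
    · by_cases hi : a x = x
      · rw [(h.evenPart_eq_self_iff _).1 hi] at hx
        simp [hc] at hx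
      · exact ⟨x, hi, by rwa [h.apply_true hi] at hx⟩
  refine ⟨hinv, ⟨z, hz⟩, ?_, fun i hi => h.evenPart_rev hi⟩
  intro i hi
  by_cases hzi : c z = c i
  · exact forall_of_firstReturn (Q := fun z => c (a z) ≠ c z) H hz hi (ht _ _ hzi) hcz hstep
  · refine forall_of_firstReturn (Q := fun z => c (a z) ≠ c z) H (haR z hz) hi (ht _ _ ?_)
      (by rw [hinv]; exact hcz.symm) hstep
    cases h1 : c (a z) <;> cases h2 : c z <;> cases h3 : c i <;> simp_all

/-- An even pairing is determined by its even part. -/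
lemma eq_of_evenPart_eq [Finite B] {π' : Perm (B × Bool)} (h : IsEvenPairing ρ c π)
    (h' : IsEvenPairing ρ c π') (heq : evenPart π h.invol = evenPart π' h'.invol) : π = π' := by
  ext1 ⟨x, _ | _⟩
  · obtain ⟨i, rfl⟩ := ρ.surjective x
    by_cases hi : evenPart π h.invol i = i
    · have h1 := (h.evenPart_eq_self_iff _).1 hi
      have h2 := (h'.evenPart_eq_self_iff _).1 (heq ▸ hi)
      rw [← h1, h.invol, h1, ← h2, h'.invol]
    · rw [h.apply_false hi, h'.apply_false (heq ▸ hi), heq]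
  · by_cases hi : evenPart π h.invol x = x
    · rw [(h.evenPart_eq_self_iff _).1 hi, (h'.evenPart_eq_self_iff _).1 (heq ▸ hi)]
    · rw [h.apply_true hi, h'.apply_true (heq ▸ hi), heq]

end IsEvenPairing

end EvenPairing

namespace IsReflection

variable {ρ : Perm B} {c : B → Bool} {a : Perm B}

lemma exists_pow_mem (h : IsReflection ρ c a)
    (ht : ∀ x y, c x = c y → ∃ k : ℕ, (ρ ^ k) x = y) (x : B) :
    ∃ k : ℕ, (ρ ^ k) x ∈ {j | a j ≠ j} := by
  obtain ⟨z, hz⟩ := h.nontriv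
  have hcz := h.color z hz
  by_cases hx : c x = c z
  · obtain ⟨k, rfl⟩ := ht _ _ hx
    exact ⟨k, hz⟩
  · have hx' : c x = c (a z) := by
      cases h1 : c (a z) <;> cases h2 : c z <;> cases h3 : c x <;> simp_all
    obtain ⟨k, hk⟩ := ht _ _ hx'
    exact ⟨k, by rw [hk]; simpa [h.invol] using hz.symm⟩

lemma apply_ne (h : IsReflection ρ c a) {i : B} (hi : a i ≠ i) : a (a i) ≠ a i := by
  rw [h.invol]
  exact hi.symm

open Classical in
lemma exists_evenPairing (h : IsReflection ρ c a) [Finite B] (hc : ∀ x, c (ρ x) = c x)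
    (ht : ∀ x y, c x = c y → ∃ k : ℕ, (ρ ^ k) x = y) :
    ∃ π, ∃ hπ : IsEvenPairing ρ c π, evenPart π hπ.invol = a := by
  set R := {j | a j ≠ j} with hR
  have H : ∀ x, ∃ k : ℕ, (ρ ^ k) x ∈ R := h.exists_pow_mem ht
  have hmem : ∀ x, a (firstHit ρ R x) ≠ firstHit ρ R x := fun x => firstHit_mem H x
  let p : B × Bool → B × Bool := fun x =>
    if x.2 then (if a x.1 = x.1 then (ρ x.1, false) else (a x.1, true))
    else (if a (ρ.symm x.1) = ρ.symm x.1 then (ρ.symm x.1, true)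
      else (ρ (a (firstHit ρ R x.1)), false))
  have pt : ∀ i, p (i, true) = if a i = i then (ρ i, false) else (a i, true) := fun i => rfl
  have pf : ∀ i, p (ρ i, false) =
      if a i = i then (i, true) else (ρ (a (firstHit ρ R (ρ i))), false) := fun i => by
    simp [p]
  have hp : Function.Involutive p := by
    rintro ⟨x, _ | _⟩
    · obtain ⟨i, rfl⟩ := ρ.surjective x
      rw [pf]
      split_ifs with hi
      · rw [pt, if_pos hi]
      · rw [pf, if_neg (h.apply_ne (hmem _)), h.rev i hi]
    · rw [pt]
      split_ifs with hi
      · rw [pf, if_pos hi]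
      · rw [pt, if_neg (h.apply_ne hi), h.invol]
  have hs : ∀ x, (hp.toPerm⁻¹ * doubled ρ) x = p (doubled ρ x) := fun x => by
    rw [Perm.mul_apply, Perm.inv_eq_iff_eq]
    exact (hp _).symm
  -- every point is labelled by the even point of its cycle
  let lab : B × Bool → B := fun x => if x.2 then x.1 else a (firstHit ρ R x.1)
  have hlab : ∀ x, lab ((hp.toPerm⁻¹ * doubled ρ) x) = lab x := by
    rintro ⟨i, _ | _⟩
    · rw [hs, doubled_false, pt]
      split_ifs with hi
      · change a (firstHit ρ R (ρ i)) = a (firstHit ρ R i)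
        rw [firstHit_apply_of_notMem H (fun h => h hi)]
      · change a i = a (firstHit ρ R i)
        rw [firstHit_of_mem hi]
    · rw [hs, doubled_true, pf]
      split_ifs with hi
      · rfl
      · exact h.rev i hi
  have hlab' : ∀ (k : ℤ) x, lab (((hp.toPerm⁻¹ * doubled ρ) ^ k) x) = lab x := by
    intro k
    induction k with
    | zero => exact fun x => rfl
    | succ k ih => intro x; rw [zpow_add_one, Perm.mul_apply, ih, hlab]
    | pred k ih =>
      intro x
      rw [zpow_sub_one, Perm.mul_apply, ih, ← hlab, ← Perm.mul_apply, mul_inv_cancel,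
        Perm.one_apply]
  refine ⟨hp.toPerm, ⟨hp, ?_, ?_, ?_, ?_⟩, ?_⟩
  · rintro ⟨x, _ | _⟩
    · obtain ⟨i, rfl⟩ := ρ.surjective x
      change p (ρ i, false) ≠ _
      rw [pf]
      split_ifs with hi
      · simp
      · intro heq
        have h1 : a (firstHit ρ R (ρ i)) = i := by simpa using heq
        have h2 := h.color _ (hmem (ρ i))
        rw [h1, color_firstHit hc, hc] at h2
        exact h2 rfl
    · change p (x, true) ≠ _
      rw [pt]
      split_ifs with hi
      · simp
      · simpa using hi
  · rintro i j ⟨k, hk⟩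
    have := hlab' k (i, true)
    rw [hk] at this
    exact this.symm
  · intro j
    exact ⟨_, sameCycle_firstHit (R := R) (π := hp.toPerm) (a := a) hp
      (fun i hi => (pt i).trans (if_neg hi))
      (fun i hi => (pt i).trans (if_pos (not_not.1 hi))) H j⟩
  · obtain ⟨z, hz⟩ := h.nontriv
    refine ⟨(z, true), ?_⟩
    change c (p (z, true)).1 ≠ c z
    rw [pt, if_neg hz]
    exact h.color z hz
  · ext i
    rw [evenPart_apply]
    change (if (p (i, true)).2 then (p (i, true)).1 else i) = a i
    rw [pt]
    split_ifs with hi <;> simp_all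

end IsReflection

lemma ncard_isEvenPairing [Finite B] {ρ : Perm B} {c : B → Bool} (hc : ∀ x, c (ρ x) = c x)
    (ht : ∀ x y, c x = c y → ∃ k : ℕ, (ρ ^ k) x = y) :
    {π | IsEvenPairing ρ c π}.ncard = {a | IsReflection ρ c a}.ncard := by
  refine Set.ncard_congr (fun π hπ => evenPart π hπ.invol) ?_ ?_ ?_
  · exact fun π hπ => hπ.isReflection hc ht
  · exact fun π π' hπ hπ' heq => hπ.eq_of_evenPart_eq hπ' heq
  · intro a ha
    obtain ⟨π, hπ, rfl⟩ := ha.exists_evenPairing hc ht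
    exact ⟨π, hπ, rfl⟩

/-- Two cycles of equal length can be exchanged by an involution reversing their orientation. -/
lemma exists_reversing [DecidableEq B] {r : Perm B} {S T : Finset B} (hd : Disjoint S T)
    (hS : r.IsCycleOn S) (hT : r.IsCycleOn T) (hST : S.card = T.card) {s t : B} (hs : s ∈ S)
    (ht : t ∈ T) :
    ∃ g : B → B, (∀ k : ℤ, g ((r ^ k) s) = (r ^ (-k)) t) ∧
      (∀ k : ℤ, g ((r ^ k) t) = (r ^ (-k)) s) ∧ ∀ x, x ∉ S → x ∉ T → g x = x := by
  classical
  have eS : ∀ x ∈ S, ∃ k : ℤ, (r ^ k) s = x := fun x hx => hS.2 hs hx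
  have eT : ∀ x ∈ T, ∃ k : ℤ, (r ^ k) t = x := fun x hx => hT.2 ht hx
  choose! kS hkS using eS
  choose! kT hkT using eT
  refine ⟨fun x => if x ∈ S then (r ^ (-kS x)) t else if x ∈ T then (r ^ (-kT x)) s else x,
    ?_, ?_, ?_⟩
  · intro k
    have hk : (r ^ k) s ∈ S := (hS.1.perm_zpow k).mapsTo hs
    have h1 := hkS _ hk
    dsimp only
    rw [if_pos hk, hT.zpow_apply_eq_zpow_apply ht, ← hST]
    rw [hS.zpow_apply_eq_zpow_apply hs] at h1
    exact h1.neg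
  · intro k
    have hk : (r ^ k) t ∈ T := (hT.1.perm_zpow k).mapsTo ht
    have h1 := hkT _ hk
    dsimp only
    rw [if_neg (Finset.disjoint_right.1 hd hk), if_pos hk, hS.zpow_apply_eq_zpow_apply hs, hST]
    rw [hT.zpow_apply_eq_zpow_apply ht] at h1
    exact h1.neg
  · intro x h1 h2
    simp [h1, h2]

/-- The part of `R` of colour `b`. -/
def colorPart (c : B → Bool) (b : Bool) (R : Finset B) : Finset B := R.filter (fun x => c x = b)

lemma mem_colorPart {c : B → Bool} {b : Bool} {R : Finset B} {x : B} :
    x ∈ colorPart c b R ↔ x ∈ R ∧ c x = b := by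
  simp [colorPart]

section CountReflections

variable [Fintype B] [DecidableEq B] {ρ : Perm B} {c : B → Bool}

/-- The support of `a`. -/
def moved (a : Perm B) : Finset B := Finset.univ.filter (fun x => a x ≠ x)

lemma mem_moved {a : Perm B} {x : B} : x ∈ moved a ↔ a x ≠ x := by simp [moved]

lemma coe_moved (a : Perm B) : (moved a : Set B) = {x | a x ≠ x} := by
  ext; simp [mem_moved]

namespace IsReflection

lemma apply_mem_colorPart {a : Perm B} (h : IsReflection ρ c a) {b : Bool} {x : B}
    (hx : x ∈ colorPart c b (moved a)) : a x ∈ colorPart c (!b) (moved a) := by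
  rw [mem_colorPart, mem_moved] at hx ⊢
  refine ⟨h.apply_ne hx.1, ?_⟩
  have := h.color x hx.1
  rw [hx.2] at this
  cases b <;> simpa using this

lemma card_colorPart {a : Perm B} (h : IsReflection ρ c a) :
    (colorPart c false (moved a)).card = (colorPart c true (moved a)).card := by
  refine Finset.card_bij (fun x _ => a x) (fun x hx => h.apply_mem_colorPart hx)
    (fun x _ y _ hxy => a.injective hxy) (fun y hy => ⟨a y, h.apply_mem_colorPart hy, h.invol y⟩)

lemma colorPart_nonempty {a : Perm B} (h : IsReflection ρ c a) (b : Bool) :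
    (colorPart c b (moved a)).Nonempty := by
  obtain ⟨z, hz⟩ := h.nontriv
  have hz' : z ∈ colorPart c (c z) (moved a) := mem_colorPart.2 ⟨mem_moved.2 hz, rfl⟩
  by_cases hb : b = c z
  · exact ⟨z, hb ▸ hz'⟩
  · refine ⟨a z, ?_⟩
    have := h.apply_mem_colorPart hz'
    rwa [show b = !c z by cases b <;> cases h1 : c z <;> simp_all]

lemma eq_of_moved_eq {a a' : Perm B} (h : IsReflection ρ c a) (h' : IsReflection ρ c a')
    (ht : ∀ x y, c x = c y → ∃ k : ℕ, (ρ ^ k) x = y) (hm : moved a = moved a') {s : B}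
    (hs : s ∈ colorPart c false (moved a)) (has : a s = a' s) : a = a' := by
  have hset : {x | a x ≠ x} = {x | a' x ≠ x} := by rw [← coe_moved, hm, coe_moved]
  have hiff : ∀ x, a x ≠ x ↔ a' x ≠ x := fun x => Set.ext_iff.1 hset x
  rw [mem_colorPart, mem_moved] at hs
  have H := h.exists_pow_mem ht
  have key : ∀ y, a y ≠ y → c y = false → a y = a' y := by
    intro y hy hcy
    refine forall_of_firstReturn (Q := fun z => a z = a' z) H hs.1 hy
      (ht _ _ (hs.2.trans hcy.symm)) has ?_
    intro z hz hzz
    have hm1 : a (firstHit ρ {x | a x ≠ x} (ρ z)) ≠ firstHit ρ {x | a x ≠ x} (ρ z) :=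
      firstHit_mem H (ρ z)
    have h1 := h.rev z hz
    have h2 := h'.rev z ((hiff z).1 hz)
    rw [← hset] at h2
    refine eq_of_firstHit_apply_eq H (h.apply_ne hm1)
      ((hiff _).2 (h'.apply_ne ((hiff _).1 hm1))) ?_
    apply_fun a at h1
    apply_fun a' at h2
    rw [h.invol] at h1
    rw [h'.invol] at h2
    rw [h1, h2, hzz]
  ext x
  by_cases hx : a x = x
  · rw [hx]
    exact (not_not.1 (fun hx' => (hiff x).2 hx' hx)).symm
  · cases hcx : c x
    · exact key x hx hcx
    · have h1 := key (a x) (h.apply_ne hx) (by simpa [hcx] using h.color x hx)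
      rw [h.invol] at h1
      conv_rhs => rw [h1]
      rw [h'.invol]

end IsReflection

lemma exists_isReflection (hc : ∀ x, c (ρ x) = c x)
    (ht : ∀ x y, c x = c y → ∃ k : ℕ, (ρ ^ k) x = y) {R : Finset B}
    (hR : (colorPart c false R).card = (colorPart c true R).card) {s t : B}
    (hs : s ∈ colorPart c false R) (htR : t ∈ colorPart c true R) :
    ∃ a, IsReflection ρ c a ∧ moved a = R ∧ a s = t := by
  have H : ∀ x, ∃ k : ℕ, (ρ ^ k) x ∈ (R : Set B) := by
    intro x
    rw [mem_colorPart] at hs htR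
    cases hx : c x
    · obtain ⟨k, hk⟩ := ht x s (hx.trans hs.2.symm)
      exact ⟨k, by rw [hk]; exact hs.1⟩
    · obtain ⟨k, hk⟩ := ht x t (hx.trans htR.2.symm)
      exact ⟨k, by rw [hk]; exact htR.1⟩
  let r₀ : B → B := fun x => if x ∈ R then firstHit ρ R (ρ x) else x
  have hr₀ : Function.Injective r₀ := by
    intro x y hxy
    simp only [r₀] at hxy
    split_ifs at hxy with hx hy hy
    · exact eq_of_firstHit_apply_eq H hx hy hxy
    · exact absurd (hxy ▸ firstHit_mem H (ρ x)) hy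
    · exact absurd (hxy ▸ firstHit_mem H (ρ y)) hx
    · exact hxy
  let r : Perm B := Equiv.ofBijective r₀ (Finite.injective_iff_bijective.1 hr₀)
  have hrR : ∀ x ∈ R, r x = firstHit ρ R (ρ x) := fun x hx => if_pos hx
  have hr : ∀ x ∉ R, r x = x := fun x hx => if_neg hx
  have hcyc : ∀ b, r.IsCycleOn (colorPart c b R : Finset B) := by
    intro b
    refine ⟨r.bijOn fun x => ?_, fun x hx y hy => ?_⟩
    · by_cases hx : x ∈ R
      · rw [hrR x hx, Finset.mem_coe, Finset.mem_coe, mem_colorPart, mem_colorPart,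
          color_firstHit hc, hc]
        have := firstHit_mem H (ρ x)
        simp only [Finset.mem_coe] at this
        simp [hx, this]
      · rw [hr x hx]
    · rw [Finset.mem_coe, mem_colorPart] at hx hy
      refine forall_of_firstReturn (Q := fun z => r.SameCycle x z) H hx.1 hy.1
        (ht _ _ (hx.2.trans hy.2.symm)) (Perm.SameCycle.refl _ _) ?_
      intro z hz hxz
      rw [← hrR z hz]
      exact hxz.apply_right
  have hd : Disjoint (colorPart c false R) (colorPart c true R) := by
    rw [Finset.disjoint_left]
    intro x h1 h2
    rw [mem_colorPart] at h1 h2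
    simp [h1.2] at h2
  obtain ⟨g, g1, g2, g3⟩ := exists_reversing hd (hcyc false) (hcyc true) hR hs htR
  have hzs : ∀ k : ℤ, (r ^ k) s ∈ colorPart c false R := fun k =>
    ((hcyc false).1.perm_zpow k).mapsTo hs
  have hzt : ∀ k : ℤ, (r ^ k) t ∈ colorPart c true R := fun k =>
    ((hcyc true).1.perm_zpow k).mapsTo htR
  have hcase : ∀ x, x ∉ R ∨ (∃ k : ℤ, (r ^ k) s = x) ∨ ∃ k : ℤ, (r ^ k) t = x := by
    intro x
    by_cases hx : x ∈ R
    · right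
      cases hcx : c x
      · exact Or.inl ((hcyc false).2 hs (mem_colorPart.2 ⟨hx, hcx⟩))
      · exact Or.inr ((hcyc true).2 htR (mem_colorPart.2 ⟨hx, hcx⟩))
    · exact Or.inl hx
  have g3' : ∀ x ∉ R, g x = x := fun x hx =>
    g3 x (fun h => hx (mem_colorPart.1 h).1) (fun h => hx (mem_colorPart.1 h).1)
  have hginv : Function.Involutive g := by
    intro x
    rcases hcase x with hx | ⟨k, rfl⟩ | ⟨k, rfl⟩
    · rw [g3' x hx, g3' x hx]
    · rw [g1, g2, neg_neg]
    · rw [g2, g1, neg_neg]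
  have hgc : ∀ x ∈ R, c (g x) ≠ c x := by
    intro x hxR
    rcases hcase x with hx | ⟨k, rfl⟩ | ⟨k, rfl⟩
    · exact absurd hxR hx
    · rw [g1, (mem_colorPart.1 (hzs _)).2, (mem_colorPart.1 (hzt _)).2]
      simp
    · rw [g2, (mem_colorPart.1 (hzs _)).2, (mem_colorPart.1 (hzt _)).2]
      simp
  have hgR : ∀ x, g x ≠ x ↔ x ∈ R := fun x =>
    ⟨fun h => by_contra fun hx => h (g3' x hx), fun h heq => hgc x h (by rw [heq])⟩
  have hset : {x | (hginv.toPerm : Perm B) x ≠ x} = (R : Set B) := Set.ext hgR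
  have hgmem : ∀ x ∈ R, g x ∈ R := fun x hx => by
    rw [← hgR] at hx ⊢
    rw [hginv]
    exact hx.symm
  refine ⟨hginv.toPerm, ⟨hginv, ⟨s, (hgR s).2 (mem_colorPart.1 hs).1⟩,
    fun i hi => hgc i ((hgR i).1 hi), ?_⟩, ?_, ?_⟩
  · intro i hi
    replace hi : i ∈ R := (hgR i).1 hi
    rw [hset]
    change g (firstHit ρ R (ρ (g (firstHit ρ R (ρ i))))) = i
    rw [← hrR i hi, ← hrR]
    · rcases hcase i with hx | ⟨k, rfl⟩ | ⟨k, rfl⟩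
      · exact absurd hi hx
      · rw [← Perm.mul_apply, ← zpow_one_add, g1, ← Perm.mul_apply, ← zpow_one_add, g2]
        congr 2
        ring
      · rw [← Perm.mul_apply, ← zpow_one_add, g2, ← Perm.mul_apply, ← zpow_one_add, g1]
        congr 2
        ring
    · apply hgmem
      rw [hrR i hi]
      exact firstHit_mem H _
  · ext x
    rw [mem_moved]
    exact hgR x
  · exact g1 0

lemma ncard_isReflection [Nonempty B] (hc : ∀ x, c (ρ x) = c x)
    (ht : ∀ x y, c x = c y → ∃ k : ℕ, (ρ ^ k) x = y) :
    {a | IsReflection ρ c a}.ncard =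
      {p : Finset B × B | (colorPart c false p.1).card = (colorPart c true p.1).card ∧
        p.2 ∈ colorPart c true p.1}.ncard := by
  have hbase : ∀ S : Finset B, S.Nonempty → Classical.epsilon (· ∈ S) ∈ S :=
    fun S hS => Classical.epsilon_spec hS
  refine Set.ncard_congr
    (fun a _ => (moved a, a (Classical.epsilon (· ∈ colorPart c false (moved a))))) ?_ ?_ ?_
  · intro a (ha : IsReflection ρ c a)
    exact ⟨ha.card_colorPart, ha.apply_mem_colorPart (hbase _ (ha.colorPart_nonempty false))⟩
  · intro a a' (ha : IsReflection ρ c a) (ha' : IsReflection ρ c a') heq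
    rw [Prod.mk.injEq] at heq
    refine ha.eq_of_moved_eq ha' ht heq.1 (hbase _ (ha.colorPart_nonempty false)) ?_
    rw [heq.2, ← heq.1]
  · rintro ⟨R, t⟩ ⟨hR, htR⟩
    have hne : (colorPart c false R).Nonempty := by
      rw [← Finset.card_pos, hR, Finset.card_pos]
      exact ⟨t, htR⟩
    obtain ⟨a, ha, rfl, hat⟩ := exists_isReflection hc ht hR (hbase _ hne) htR
    exact ⟨a, ha, by rw [hat]⟩

end CountReflections

section CountMarked

variable [Fintype B] [DecidableEq B] {c : B → Bool}

lemma card_symmDiff_colorPart (R : Finset B) :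
    (symmDiff R (colorPart c false Finset.univ)).card + (colorPart c false R).card =
      (colorPart c false Finset.univ).card + (colorPart c true R).card := by
  have h1 : symmDiff R (colorPart c false Finset.univ) =
      colorPart c true R ∪ (colorPart c false Finset.univ \ colorPart c false R) := by
    ext x
    simp only [Finset.mem_symmDiff, Finset.mem_union, Finset.mem_sdiff, mem_colorPart,
      Finset.mem_univ, true_and]
    cases c x <;> simp
  have hd : Disjoint (colorPart c true R)
      (colorPart c false Finset.univ \ colorPart c false R) := by
    rw [Finset.disjoint_left]
    intro x hx hx'
    rw [mem_colorPart] at hx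
    rw [Finset.mem_sdiff, mem_colorPart, hx.2] at hx'
    simp at hx'
  have hsub : colorPart c false R ⊆ colorPart c false Finset.univ :=
    Finset.filter_subset_filter _ (Finset.subset_univ _)
  rw [h1, Finset.card_union_of_disjoint hd, Finset.card_sdiff_of_subset hsub]
  have := Finset.card_le_card hsub
  omega

lemma ncard_marked (hn : 1 ≤ (colorPart c false Finset.univ).card) :
    {p : Finset B × B | (colorPart c false p.1).card = (colorPart c true p.1).card ∧
        p.2 ∈ colorPart c true p.1}.ncard =
      (colorPart c true Finset.univ).card *
        (Fintype.card B - 1).choose ((colorPart c false Finset.univ).card - 1) := by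
  set L := colorPart c false Finset.univ with hL
  have hmemL : ∀ x, x ∈ L ↔ c x = false := fun x => by simp [hL, mem_colorPart]
  let D : Finset (Σ _ : B, Finset B) := (colorPart c true Finset.univ).sigma
    fun t => (Finset.univ.erase t).powersetCard (L.card - 1)
  have hD : D.card = (colorPart c true Finset.univ).card *
      (Fintype.card B - 1).choose (L.card - 1) := by
    simp [D, Finset.card_sigma, Finset.card_powersetCard, Finset.card_erase_of_mem,
      Finset.card_univ]
  rw [← hD, ← Set.ncard_coe_finset]
  refine Set.ncard_congr (fun p _ => ⟨p.2, (symmDiff p.1 L).erase p.2⟩) ?_ ?_ ?_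
  · rintro ⟨R, t⟩ ⟨hR, htR⟩
    dsimp only at hR htR ⊢
    rw [mem_colorPart] at htR
    have hU := card_symmDiff_colorPart (c := c) R
    rw [← hL] at hU
    have htU : t ∈ symmDiff R L := by simp [Finset.mem_symmDiff, hmemL, htR]
    rw [Finset.mem_coe, Finset.mem_sigma, mem_colorPart, Finset.mem_powersetCard,
      Finset.card_erase_of_mem htU]
    refine ⟨⟨Finset.mem_univ _, htR.2⟩, Finset.erase_subset_erase _ (Finset.subset_univ _), ?_⟩
    omega
  · rintro ⟨R, t⟩ ⟨R', t'⟩ ⟨-, ht⟩ ⟨-, ht'⟩ heq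
    dsimp only at ht ht' heq
    rw [mem_colorPart] at ht ht'
    obtain ⟨rfl, heq⟩ := Sigma.mk.inj heq
    have h1 : ∀ R : Finset B, t ∈ R → t ∈ symmDiff R L := fun R hR => by
      simp [Finset.mem_symmDiff, hmemL, hR, ht.2]
    have h2 := congrArg (insert t) (eq_of_heq heq)
    rw [Finset.insert_erase (h1 R ht.1), Finset.insert_erase (h1 R' ht'.1)] at h2
    rw [symmDiff_left_injective L h2]
  · rintro ⟨t, V⟩ hV
    simp only [D, Finset.mem_coe, Finset.mem_sigma, mem_colorPart, Finset.mem_powersetCard,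
      Finset.mem_univ, true_and] at hV
    obtain ⟨htc, hVs, hVc⟩ := hV
    have htV : t ∉ V := fun h => by simpa using hVs h
    have hsd : symmDiff (symmDiff (insert t V) L) L = insert t V := symmDiff_symmDiff_cancel_right _ _
    have hU := card_symmDiff_colorPart (c := c) (symmDiff (insert t V) L)
    rw [← hL, hsd, Finset.card_insert_of_notMem htV] at hU
    refine ⟨(symmDiff (insert t V) L, t), ⟨?_, ?_⟩, ?_⟩
    · dsimp only
      omega
    · simp [mem_colorPart, Finset.mem_symmDiff, hmemL, htc]
    · dsimp only
      rw [hsd, Finset.erase_insert htV]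

end CountMarked

section Bipartite

/-- The involution of `B × Bool` exchanging `(i, false)` and `(i, true)`. -/
def blockSwap (B : Type*) : Perm (B × Bool) :=
  Function.Involutive.toPerm (fun x => (x.1, !x.2)) (fun x => by simp)

@[simp] lemma blockSwap_apply (x : B × Bool) : blockSwap B x = (x.1, !x.2) := rfl

/-- `A` is `π`-invariant and contains exactly one point of every block. -/
def IsBlockSection (π : Perm (B × Bool)) (A : Set (B × Bool)) : Prop :=
  (∀ x, π x ∈ A ↔ x ∈ A) ∧ ∀ x, blockSwap B x ∈ A ↔ x ∉ A

/-- A fixed-point-free involution admitting a block section forces an even number of blocks. -/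
lemma even_card_of_isBlockSection [Fintype B] {π : Perm (B × Bool)} (hπ : ∀ x, π (π x) = x)
    (hne : ∀ x, π x ≠ x) {A : Set (B × Bool)} (hA : IsBlockSection π A) :
    Even (Fintype.card B) := by
  classical
  have h1 : ∑ x ∈ A.toFinset, (1 : ZMod 2) = 0 :=
    Finset.sum_involution (fun x _ => π x) (fun _ _ => by decide) (fun x _ _ => hne x)
      (fun x hx => by rw [Set.mem_toFinset] at hx ⊢; exact (hA.1 x).2 hx) (fun x _ => hπ x)
  have h2 : A.toFinset.card = Fintype.card B := by
    rw [← Finset.card_univ]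
    refine Finset.card_bij (fun x _ => x.1) (fun _ _ => Finset.mem_univ _) ?_ ?_
    · rintro ⟨i, b⟩ hx ⟨j, b'⟩ hy (rfl : i = j)
      rw [Set.mem_toFinset] at hx hy
      by_contra hb
      have : b' = !b := by cases b <;> cases b' <;> simp_all
      rw [this] at hy
      exact (hA.2 (i, b)).1 hy hx
    · intro i _
      by_cases hi : (i, true) ∈ A
      · exact ⟨(i, true), Set.mem_toFinset.2 hi, rfl⟩
      · exact ⟨(i, false), Set.mem_toFinset.2 ((hA.2 (i, true)).2 hi), rfl⟩
  rw [Finset.sum_const, h2, nsmul_one, ZMod.natCast_eq_zero_iff_even] at h1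
  exact h1

/-- Two involutions whose product has a single cycle of even length on a half of the points
exchanged by both of them admit a common bipartition. -/
lemma exists_isBlockSection [DecidableEq B] {π : Perm (B × Bool)} (hπ : ∀ x, π (π x) = x)
    {Y : Finset (B × Bool)} (hswap : ∀ x, blockSwap B x ∈ Y ↔ x ∉ Y)
    (hY : (π * blockSwap B).IsCycleOn Y) {y : B × Bool} (hy : y ∈ Y) (heven : Even Y.card) :
    ∃ A, IsBlockSection π A := by
  set τ := π * blockSwap B with hτ
  have hI : ∀ x, blockSwap B (blockSwap B x) = x := fun x => by simp
  have hmem : ∀ k : ℤ, (τ ^ k) y ∈ Y := fun k => (hY.1.perm_zpow k).mapsTo hy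
  have hpar : ∀ j k : ℤ, (τ ^ j) y = (τ ^ k) y → (Even j ↔ Even k) := by
    intro j k h
    rw [hY.zpow_apply_eq_zpow_apply hy, Int.modEq_iff_dvd] at h
    have h2 : (2 : ℤ) ∣ k - j := dvd_trans (by exact_mod_cast heven.two_dvd) h
    rw [← even_iff_two_dvd, Int.even_sub] at h2
    exact h2.symm
  have hπτ : ∀ x, π (blockSwap B x) = τ x := fun x => rfl
  have hπτ' : ∀ x, π (τ x) = blockSwap B x := fun x => hπ _
  have hstep : ∀ k : ℤ, τ ((τ ^ (k - 1)) y) = (τ ^ k) y := fun k => by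
    rw [← Perm.mul_apply, ← zpow_one_add, add_sub_cancel]
  let A : Set (B × Bool) := {x | ∃ k : ℤ, (Even k ∧ (τ ^ k) y = x) ∨
    (¬ Even k ∧ blockSwap B ((τ ^ k) y) = x)}
  have hAπ : ∀ x, x ∈ A → π x ∈ A := by
    rintro x ⟨k, ⟨hk, rfl⟩ | ⟨hk, rfl⟩⟩
    · refine ⟨k - 1, Or.inr ⟨by simp [hk], ?_⟩⟩
      rw [← hπτ', hstep]
    · refine ⟨1 + k, Or.inl ⟨by simp [Int.even_add, hk], ?_⟩⟩
      rw [hπτ, zpow_one_add, Perm.mul_apply]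
  have hdich : ∀ x, (∃ k : ℤ, (τ ^ k) y = x) ∨ ∃ k : ℤ, blockSwap B ((τ ^ k) y) = x := by
    intro x
    by_cases hx : x ∈ Y
    · exact Or.inl (hY.2 hy hx)
    · obtain ⟨k, hk⟩ := hY.2 hy ((hswap x).2 hx)
      exact Or.inr ⟨k, by rw [hk, hI]⟩
  have hA1 : ∀ k : ℤ, (τ ^ k) y ∈ A ↔ Even k := by
    refine fun k => ⟨?_, fun hk => ⟨k, Or.inl ⟨hk, rfl⟩⟩⟩
    rintro ⟨j, ⟨hj, h⟩ | ⟨hj, h⟩⟩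
    · exact (hpar _ _ h).1 hj
    · exact absurd (hmem j) ((hswap _).1 (h ▸ hmem k))
  have hA2 : ∀ k : ℤ, blockSwap B ((τ ^ k) y) ∈ A ↔ ¬ Even k := by
    refine fun k => ⟨?_, fun hk => ⟨k, Or.inr ⟨hk, rfl⟩⟩⟩
    rintro ⟨j, ⟨hj, h⟩ | ⟨hj, h⟩⟩
    · exact absurd (hmem k) ((hswap _).1 (h ▸ hmem j))
    · rwa [← hpar _ _ ((blockSwap B).injective h)]
  refine ⟨A, fun x => ⟨fun h => hπ x ▸ hAπ _ h, hAπ x⟩, fun x => ?_⟩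
  rcases hdich x with ⟨k, rfl⟩ | ⟨k, rfl⟩
  · rw [hA1, hA2]
  · rw [hI, hA1, hA2, not_not]

variable {ρ : Perm B} {c : B → Bool} {π : Perm (B × Bool)}

lemma IsEvenPairing.exists_isBlockSection [Fintype B] [DecidableEq B]
    (h : IsEvenPairing ρ c π) (hc : ∀ x, c (ρ x) = c x)
    (ht : ∀ x y, c x = c y → ∃ k : ℕ, (ρ ^ k) x = y) (heven : Even (Fintype.card B)) :
    ∃ A, IsBlockSection π A := by
  have hr := h.isReflection hc ht
  have H := h.exists_pow_mem
  set a := evenPart π h.invol with ha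
  set R := {j | a j ≠ j} with hRdef
  set τ := π * blockSwap B with hτ
  have hτt : ∀ i, τ (i, true) = π (i, false) := fun i => rfl
  have hτf : ∀ i, τ (i, false) = π (i, true) := fun i => rfl
  have fix_true : ∀ i, a i = i → π (i, true) = (ρ i, false) := fun i hi =>
    (h.evenPart_eq_self_iff i).1 hi
  have fix_false : ∀ i, a i = i → π (ρ i, false) = (i, true) := fun i hi => by
    rw [← fix_true i hi, h.invol]
  let Y : Finset (B × Bool) := Finset.univ.filter (fun x => c x.1 ≠ x.2)
  have hY : ∀ x, x ∈ Y ↔ c x.1 ≠ x.2 := fun x => by simp [Y]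
  have hswap : ∀ x, blockSwap B x ∈ Y ↔ x ∉ Y := by
    rintro ⟨i, b⟩
    rw [hY, hY]
    cases hi : c i <;> cases b <;> simp [hi]
  have hcne : ∀ i, a i ≠ i → c (a i) = !c i := fun i hi => by
    have := hr.color i hi
    cases h1 : c (a i) <;> cases h2 : c i <;> simp_all
  have hπY : ∀ x, π x ∈ Y ↔ x ∉ Y := by
    rintro ⟨x, _ | _⟩
    · obtain ⟨i, rfl⟩ := ρ.surjective x
      by_cases hi : a i = i
      · rw [fix_false i hi, hY, hY]
        simp [hc]
      · rw [h.apply_false hi, hY, hY]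
        have h1 := firstHit_mem H (ρ i)
        simp only [hc, ← ha, ← hRdef]
        rw [hcne _ h1, color_firstHit hc, hc]
        simp
    · by_cases hi : a x = x
      · rw [fix_true x hi, hY, hY]
        simp [hc]
      · rw [h.apply_true hi, hY, hY]
        simp only [← ha, hcne _ hi]
        simp
  have hτY : ∀ x, τ x ∈ Y ↔ x ∈ Y := fun x => by
    rw [hτ, Perm.mul_apply, hπY, hswap, not_not]
  have up_true : ∀ i, τ.SameCycle (i, true) (firstHit ρ R i, true) := by
    intro i
    obtain ⟨k, hk⟩ := H i
    induction k generalizing i with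
    | zero =>
      replace hk : i ∈ R := hk
      rw [firstHit_of_mem hk]
    | succ k ih =>
      by_cases hi : i ∈ R
      · rw [firstHit_of_mem hi]
      · rw [pow_succ, Perm.mul_apply] at hk
        rw [← firstHit_apply_of_notMem H hi, ← fix_false i (not_not.1 hi), ← hτt,
          Perm.sameCycle_apply_left]
        exact ih _ hk
  have up_false : ∀ i, τ.SameCycle (i, false) (a (firstHit ρ R i), true) := by
    intro i
    obtain ⟨k, hk⟩ := H i
    induction k generalizing i with
    | zero =>
      replace hk : i ∈ R := hk
      rw [firstHit_of_mem hk, ← h.apply_true hk, ← hτf, Perm.sameCycle_apply_right]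
    | succ k ih =>
      by_cases hi : i ∈ R
      · rw [firstHit_of_mem hi, ← h.apply_true hi, ← hτf, Perm.sameCycle_apply_right]
      · rw [pow_succ, Perm.mul_apply] at hk
        rw [← firstHit_apply_of_notMem H hi, ← Perm.sameCycle_apply_left, hτf,
          fix_true i (not_not.1 hi)]
        exact ih _ hk
  obtain ⟨s, hsm⟩ := hr.colorPart_nonempty false
  rw [mem_colorPart, mem_moved] at hsm
  obtain ⟨hsR, hsc⟩ := hsm
  have connR : ∀ z ∈ R, c z = false → τ.SameCycle (s, true) (z, true) := by
    intro z hz hcz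
    refine forall_of_firstReturn (Q := fun z => τ.SameCycle (s, true) (z, true)) H hsR hz
      (ht _ _ (hsc.trans hcz.symm)) (Perm.SameCycle.refl _ _) ?_
    intro z hz hsz
    refine hsz.trans (Perm.SameCycle.trans ?_ (up_true (ρ z)))
    rw [← Perm.sameCycle_apply_right, hτt, h.apply_false hz]
    have h1 := up_false (ρ (a (firstHit ρ R (ρ z))))
    rw [hr.rev z hz] at h1
    exact h1.symm
  have conn : ∀ x ∈ Y, τ.SameCycle (s, true) x := by
    rintro ⟨i, _ | _⟩ hx
    · refine (connR _ ?_ ?_).trans (up_false i).symm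
      · exact hr.apply_ne (firstHit_mem H i)
      · rw [hcne _ (firstHit_mem H i), color_firstHit hc]
        simpa [hY] using hx
    · refine (connR _ (firstHit_mem H i) ?_).trans (up_true i).symm
      rw [color_firstHit hc]
      simpa [hY] using hx
  have hcyc : τ.IsCycleOn Y :=
    ⟨τ.bijOn fun x => hτY x, fun x hx y hy => (conn x hx).symm.trans (conn y hy)⟩
  have hcard : Y.card = Fintype.card B := by
    rw [← Finset.card_univ]
    refine Finset.card_bij (fun x _ => x.1) (fun _ _ => Finset.mem_univ _) ?_ ?_
    · rintro ⟨i, b⟩ hx ⟨j, b'⟩ hy (rfl : i = j)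
      rw [hY] at hx hy
      cases hi : c i <;> cases b <;> cases b' <;> simp_all
    · intro i _
      exact ⟨(i, !c i), by simp [hY], rfl⟩
  exact AnnularPairing.exists_isBlockSection h.invol hswap hcyc
    (y := (s, true)) (by simp [hY, hsc]) (hcard ▸ heven)

end Bipartite

section Circles

lemma val_finRotate {N : ℕ} (i : Fin N) : (finRotate N i : ℕ) = (i + 1) % N := by
  rcases N with _ | N
  · exact i.elim0
  · rw [finRotate_apply, Fin.val_add_one]
    split_ifs with h
    · simp [h]
    · have : (i : ℕ) ≠ N := fun h' => h (Fin.ext h')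
      rw [Nat.mod_eq_of_lt]
      omega

lemma val_finRotate_pow {N : ℕ} (k : ℕ) (i : Fin N) :
    (((finRotate N) ^ k) i : ℕ) = (i + k) % N := by
  induction k with
  | zero => simp [Nat.mod_eq_of_lt i.isLt]
  | succ k ih => rw [pow_succ', Perm.mul_apply, val_finRotate, ih, Nat.mod_add_mod, add_assoc]

lemma exists_finRotate_pow {N : ℕ} (i j : Fin N) : ∃ k : ℕ, ((finRotate N) ^ k) i = j := by
  refine ⟨j + (N - i), Fin.ext ?_⟩
  rw [val_finRotate_pow, show (i : ℕ) + (j + (N - i)) = j + N by omega, Nat.add_mod_right,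
    Nat.mod_eq_of_lt j.isLt]

variable (n m : ℕ)

/-- The rotation of the blocks `{2i-1, 2i}` on both circles. -/
def blockRotate : Perm (Fin n ⊕ Fin m) := (finRotate n).sumCongr (finRotate m)

variable {n m}

lemma isRight_blockRotate (x : Fin n ⊕ Fin m) : (blockRotate n m x).isRight = x.isRight := by
  rcases x with i | i <;> rfl

lemma blockRotate_pow_inl (k : ℕ) (i : Fin n) :
    (blockRotate n m ^ k) (.inl i) = .inl ((finRotate n ^ k) i) := by
  induction k with
  | zero => rfl
  | succ k ih => rw [pow_succ', pow_succ', Perm.mul_apply, Perm.mul_apply, ih]; rfl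

lemma blockRotate_pow_inr (k : ℕ) (i : Fin m) :
    (blockRotate n m ^ k) (.inr i) = .inr ((finRotate m ^ k) i) := by
  induction k with
  | zero => rfl
  | succ k ih => rw [pow_succ', pow_succ', Perm.mul_apply, Perm.mul_apply, ih]; rfl

lemma exists_blockRotate_pow (x y : Fin n ⊕ Fin m) (h : x.isRight = y.isRight) :
    ∃ k : ℕ, (blockRotate n m ^ k) x = y := by
  rcases x with i | i <;> rcases y with j | j
  · obtain ⟨k, rfl⟩ := exists_finRotate_pow i j
    exact ⟨k, blockRotate_pow_inl k i⟩
  · simp at h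
  · simp at h
  · obtain ⟨k, rfl⟩ := exists_finRotate_pow i j
    exact ⟨k, blockRotate_pow_inr k i⟩

/-- The position of a block: outer blocks come first. -/
def blockIndex : Fin n ⊕ Fin m → ℕ := Sum.elim (fun i => i) (fun j => n + j)

lemma blockIndex_lt (x : Fin n ⊕ Fin m) : blockIndex x < n + m := by
  rcases x with i | j <;> simp only [blockIndex, Sum.elim_inl, Sum.elim_inr] <;> omega

lemma blockIndex_injective : Function.Injective (blockIndex (n := n) (m := m)) := by
  rintro (i | i) (j | j) h <;> simp only [blockIndex, Sum.elim_inl, Sum.elim_inr] at h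
  · rw [Fin.ext h]
  · omega
  · omega
  · rw [Fin.ext (Nat.add_left_cancel h)]

lemma exists_blockIndex_eq {k : ℕ} (hk : k < n + m) : ∃ x : Fin n ⊕ Fin m, blockIndex x = k := by
  by_cases h : k < n
  · exact ⟨.inl ⟨k, h⟩, rfl⟩
  · exact ⟨.inr ⟨k - n, by omega⟩, by simp only [blockIndex, Sum.elim_inr]; omega⟩

variable (n m)

/-- The number carried by a point of a block (0-indexed). -/
def pointFun (x : (Fin n ⊕ Fin m) × Bool) : Fin (2 * n + 2 * m) :=
  ⟨2 * blockIndex x.1 + x.2.toNat, by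
    have := blockIndex_lt x.1
    have := Bool.toNat_le x.2
    omega⟩

lemma pointFun_bijective : Function.Bijective (pointFun n m) := by
  rw [Fintype.bijective_iff_injective_and_card]
  constructor
  · rintro ⟨x, b⟩ ⟨y, b'⟩ h
    have h' : 2 * blockIndex x + b.toNat = 2 * blockIndex y + b'.toNat := congrArg Fin.val h
    have h1 := Bool.toNat_le b
    have h2 := Bool.toNat_le b'
    have hxy : x = y := blockIndex_injective (by omega)
    have hb : b.toNat = b'.toNat := by rw [hxy] at h'; omega
    rw [hxy]
    cases b <;> cases b' <;> simp_all
  · simp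
    ring

/-- Labelling of the points of all blocks by `Fin (2 * n + 2 * m)`. -/
noncomputable def pointEquiv : (Fin n ⊕ Fin m) × Bool ≃ Fin (2 * n + 2 * m) :=
  Equiv.ofBijective (pointFun n m) (pointFun_bijective n m)

lemma val_pointEquiv (x : (Fin n ⊕ Fin m) × Bool) :
    (pointEquiv n m x : ℕ) = 2 * blockIndex x.1 + x.2.toNat := rfl

lemma annularGamma_castAdd {p q : ℕ} (i : Fin p) :
    annularGamma p q (Fin.castAdd q i) = Fin.castAdd q (finRotate p i) := by
  simp [annularGamma]

lemma annularGamma_natAdd {p q : ℕ} (i : Fin q) :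
    annularGamma p q (Fin.natAdd p i) = Fin.natAdd p (finRotate q i) := by
  simp [annularGamma]

lemma annularGamma_pointEquiv (x : (Fin n ⊕ Fin m) × Bool) :
    annularGamma (2 * n) (2 * m) (pointEquiv n m x) =
      pointEquiv n m (doubled (blockRotate n m) x) := by
  rcases x with ⟨i | j, b⟩
  · have hb := Bool.toNat_le b
    have h1 : pointEquiv n m (.inl i, b) = Fin.castAdd (2 * m) ⟨2 * i + b.toNat, by omega⟩ := rfl
    rw [h1, annularGamma_castAdd]
    ext
    rw [val_pointEquiv, Fin.val_castAdd, val_finRotate]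
    cases b
    · simp only [Bool.toNat_false, doubled_false, blockIndex, Sum.elim_inl, Bool.toNat_true]
      rw [Nat.mod_eq_of_lt]
      omega
    · simp only [Bool.toNat_true, doubled_true, blockRotate, Equiv.sumCongr_apply, Sum.map_inl,
        blockIndex, Sum.elim_inl, Bool.toNat_false, val_finRotate]
      rw [← Nat.mul_mod_mul_left]
      rfl
  · have hb := Bool.toNat_le b
    have h1 : pointEquiv n m (.inr j, b) = Fin.natAdd (2 * n) ⟨2 * j + b.toNat, by omega⟩ := by
      ext
      rw [val_pointEquiv, Fin.val_natAdd]
      simp only [blockIndex, Sum.elim_inr]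
      ring
    rw [h1, annularGamma_natAdd]
    ext
    rw [val_pointEquiv, Fin.val_natAdd, val_finRotate]
    cases b
    · simp only [Bool.toNat_false, doubled_false, blockIndex, Sum.elim_inr, Bool.toNat_true]
      rw [Nat.mod_eq_of_lt] <;> omega
    · simp only [Bool.toNat_true, doubled_true, blockRotate, Equiv.sumCongr_apply, Sum.map_inr,
        blockIndex, Sum.elim_inr, Bool.toNat_false, val_finRotate]
      rw [mul_add, ← Nat.mul_mod_mul_left]
      rfl

end Circles

section CycleCount

variable {N : ℕ}

lemma cycleCount_eq_ncard_range (α : Perm (Fin N)) :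
    cycleCount α = (Set.range fun x => {y | α.SameCycle x y}).ncard := by
  unfold cycleCount
  congr 1
  ext O
  simp only [Set.mem_ofPred_eq, Set.mem_range, eq_comm]

lemma setOf_sameCycle_eq_iff {α : Perm (Fin N)} {x y : Fin N} :
    {z | α.SameCycle x z} = {z | α.SameCycle y z} ↔ α.SameCycle x y := by
  constructor
  · intro h
    have : y ∈ {z | α.SameCycle x z} := h ▸ Perm.SameCycle.refl α y
    exact this
  · intro h
    ext z
    exact ⟨fun hz => h.symm.trans hz, fun hz => h.trans hz⟩

lemma two_mul_cycleCount {α : Perm (Fin N)} (hα : ∀ x, α (α x) = x) (hne : ∀ x, α x ≠ x) :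
    2 * cycleCount α = N := by
  classical
  have hpow : ∀ k : ℤ, ∀ x, (α ^ k) x = x ∨ (α ^ k) x = α x := by
    intro k
    induction k with
    | zero => exact fun x => Or.inl rfl
    | succ k ih =>
      intro x
      rw [zpow_add_one, Perm.mul_apply]
      rcases ih (α x) with h | h <;> rw [h]
      · exact Or.inr rfl
      · exact Or.inl (hα x)
    | pred k ih =>
      intro x
      have hi : α⁻¹ x = α x := by rw [Perm.inv_eq_iff_eq, hα]
      rw [zpow_sub_one, Perm.mul_apply, hi]
      rcases ih (α x) with h | h <;> rw [h]
      · exact Or.inr rfl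
      · exact Or.inl (hα x)
  have hsc : ∀ x y, α.SameCycle x y ↔ y = x ∨ y = α x := by
    refine fun x y => ⟨?_, ?_⟩
    · rintro ⟨k, rfl⟩
      exact hpow k x
    · rintro (rfl | rfl)
      · exact Perm.SameCycle.refl _ _
      · exact (Perm.SameCycle.refl _ _).apply_right
  let orb : Fin N → Set (Fin N) := fun x => {y | α.SameCycle x y}
  have hcc : cycleCount α = (Finset.univ.image orb).card := by
    rw [cycleCount_eq_ncard_range, ← Set.ncard_coe_finset]
    simp [orb]
  have h1 := Finset.card_eq_sum_card_image orb Finset.univ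
  rw [Finset.sum_const_nat (m := 2), Finset.card_univ, Fintype.card_fin] at h1
  · rw [hcc, mul_comm]
    exact h1.symm
  · intro O hO
    obtain ⟨x, -, rfl⟩ := Finset.mem_image.1 hO
    rw [← Finset.card_pair (hne x).symm]
    congr 1
    ext y
    rw [Finset.mem_filter, Finset.mem_insert, Finset.mem_singleton, ← hsc]
    simp only [Finset.mem_univ, true_and, orb]
    rw [setOf_sameCycle_eq_iff, Perm.sameCycle_comm]

/-- A family of points in distinct cycles meets every cycle iff it has as many points as there
are cycles. -/
lemma cycleCount_eq_card_iff {ι : Type*} [Fintype ι] {α : Perm (Fin N)} {g : ι → Fin N}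
    (hg : ∀ i j, α.SameCycle (g i) (g j) → i = j) :
    cycleCount α = Fintype.card ι ↔ ∀ x, ∃ i, α.SameCycle x (g i) := by
  let orb : Fin N → Set (Fin N) := fun x => {y | α.SameCycle x y}
  have hinj : Function.Injective (orb ∘ g) := fun i j hij =>
    hg i j (setOf_sameCycle_eq_iff.1 hij)
  have hcard : (Set.range (orb ∘ g)).ncard = Fintype.card ι := by
    rw [← Set.image_univ, Set.ncard_image_of_injective _ hinj, Set.ncard_univ,
      Nat.card_eq_fintype_card]
  have hsub : Set.range (orb ∘ g) ⊆ Set.range orb := Set.range_comp_subset_range _ _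
  rw [cycleCount_eq_ncard_range, ← hcard]
  constructor
  · intro h x
    have heq := Set.eq_of_subset_of_ncard_le hsub h.le (Set.finite_range _)
    obtain ⟨i, hi⟩ : orb x ∈ Set.range (orb ∘ g) := heq ▸ Set.mem_range_self x
    exact ⟨i, setOf_sameCycle_eq_iff.1 hi.symm⟩
  · intro h
    congr 1
    refine Set.Subset.antisymm ?_ hsub
    rintro _ ⟨x, rfl⟩
    obtain ⟨i, hi⟩ := h x
    exact ⟨i, setOf_sameCycle_eq_iff.2 hi.symm⟩

end CycleCount

lemma sameCycle_permCongr_iff {X Y : Type*} (e : X ≃ Y) (f : Perm X) (x y : X) :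
    (e.permCongr f).SameCycle (e x) (e y) ↔ f.SameCycle x y := by
  have hpow : ∀ k : ℤ, ((e.permCongr f) ^ k) (e x) = e ((f ^ k) x) := by
    intro k
    have : (e.permCongr f) ^ k = e.permCongr (f ^ k) := (map_zpow e.permCongrHom f k).symm
    rw [this, Equiv.permCongr_apply, Equiv.symm_apply_apply]
  simp only [Perm.SameCycle, hpow, e.apply_eq_iff_eq]

section Transfer

variable {n m : ℕ} (π : Perm ((Fin n ⊕ Fin m) × Bool))

lemma permCongr_pointEquiv (x : (Fin n ⊕ Fin m) × Bool) :
    (pointEquiv n m).permCongr π (pointEquiv n m x) = pointEquiv n m (π x) := by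
  simp

lemma inv_mul_annularGamma :
    ((pointEquiv n m).permCongr π)⁻¹ * annularGamma (2 * n) (2 * m) =
      (pointEquiv n m).permCongr (π⁻¹ * doubled (blockRotate n m)) := by
  ext1 y
  obtain ⟨x, rfl⟩ := (pointEquiv n m).surjective y
  rw [Perm.mul_apply, annularGamma_pointEquiv, Perm.inv_eq_iff_eq, permCongr_pointEquiv,
    permCongr_pointEquiv, ← Perm.mul_apply π, mul_inv_cancel_left]

lemma separatesEven_iff :
    SeparatesEven (((pointEquiv n m).permCongr π)⁻¹ * annularGamma (2 * n) (2 * m)) ↔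
      ∀ i j, (π⁻¹ * doubled (blockRotate n m)).SameCycle (i, true) (j, true) → i = j := by
  rw [inv_mul_annularGamma]
  constructor
  · intro h i j hij
    have h1 := h (pointEquiv n m (i, true)) (pointEquiv n m (j, true))
      ((sameCycle_permCongr_iff _ _ _ _).2 hij)
      (by rw [val_pointEquiv, Bool.toNat_true]; omega)
      (by rw [val_pointEquiv, Bool.toNat_true]; omega)
    exact congrArg Prod.fst ((pointEquiv n m).injective h1)
  · intro h x y hxy hx hy
    obtain ⟨⟨i, b⟩, rfl⟩ := (pointEquiv n m).surjective x
    obtain ⟨⟨j, b'⟩, rfl⟩ := (pointEquiv n m).surjective y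
    rw [val_pointEquiv] at hx hy
    cases b
    · rw [Bool.toNat_false] at hx
      omega
    cases b'
    · rw [Bool.toNat_false] at hy
      omega
    rw [h i j ((sameCycle_permCongr_iff _ _ _ _).1 hxy)]

lemma cycleCount_add_eq_iff (hπ : ∀ x, π (π x) = x) (hne : ∀ x, π x ≠ x)
    (hsep : ∀ i j, (π⁻¹ * doubled (blockRotate n m)).SameCycle (i, true) (j, true) → i = j) :
    cycleCount ((pointEquiv n m).permCongr π) +
        cycleCount (((pointEquiv n m).permCongr π)⁻¹ * annularGamma (2 * n) (2 * m)) =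
      2 * n + 2 * m ↔
    ∀ j, ∃ i, (π⁻¹ * doubled (blockRotate n m)).SameCycle (j, false) (i, true) := by
  have h1 : 2 * cycleCount ((pointEquiv n m).permCongr π) = 2 * n + 2 * m := by
    apply two_mul_cycleCount
    · intro x
      simp [hπ]
    · intro y
      obtain ⟨x, rfl⟩ := (pointEquiv n m).surjective y
      rw [permCongr_pointEquiv]
      exact fun h => hne x ((pointEquiv n m).injective h)
  rw [inv_mul_annularGamma]
  have h2 := cycleCount_eq_card_iff (ι := Fin n ⊕ Fin m)
    (α := (pointEquiv n m).permCongr (π⁻¹ * doubled (blockRotate n m)))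
    (g := fun i => pointEquiv n m (i, true))
    (fun i j hij => hsep i j ((sameCycle_permCongr_iff _ _ _ _).1 hij))
  rw [Fintype.card_sum, Fintype.card_fin, Fintype.card_fin] at h2
  rw [← Equiv.forall_congr_right (pointEquiv n m)] at h2
  simp only [sameCycle_permCongr_iff] at h2
  constructor
  · intro h j
    exact h2.1 (by omega) (j, false)
  · intro h
    have h3 := h2.2 (by
      rintro ⟨j, _ | _⟩
      · exact h j
      · exact ⟨j, Perm.SameCycle.refl _ _⟩)
    omega

lemma jointTrans_iff (hn : 1 ≤ n) (hm : 1 ≤ m) :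
    JointTrans ((pointEquiv n m).permCongr π) (annularGamma (2 * n) (2 * m)) ↔
      ∃ x, (π x).1.isRight ≠ x.1.isRight := by
  set e := pointEquiv n m with he
  set P := e.permCongr π with hP
  set Γ := annularGamma (2 * n) (2 * m) with hΓ
  have hPe : ∀ x, P (e x) = e (π x) := permCongr_pointEquiv π
  have hΓe : ∀ x, Γ (e x) = e (doubled (blockRotate n m) x) := annularGamma_pointEquiv n m
  constructor
  · intro h
    by_contra! hcon
    have hinv : ∀ g ∈ Subgroup.closure ({P, Γ} : Set (Perm (Fin (2 * n + 2 * m)))),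
        ∀ y, (e.symm (g y)).1.isRight = (e.symm y).1.isRight := by
      intro g hg
      induction hg using Subgroup.closure_induction with
      | mem g hg =>
        intro y
        obtain ⟨⟨i, b⟩, rfl⟩ := e.surjective y
        rcases hg with rfl | rfl
        · rw [hPe, Equiv.symm_apply_apply, Equiv.symm_apply_apply]
          exact hcon _
        · rw [hΓe, Equiv.symm_apply_apply, Equiv.symm_apply_apply]
          cases b
          · rfl
          · exact isRight_blockRotate i
      | one => exact fun y => rfl
      | mul g g' _ _ ih ih' => intro y; rw [Perm.mul_apply, ih, ih']
      | inv g _ ih => intro y; rw [← ih (g⁻¹ y), ← Perm.mul_apply, mul_inv_cancel, Perm.one_apply]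
    obtain ⟨g, hg, hgy⟩ := h (e (.inl ⟨0, hn⟩, false)) (e (.inr ⟨0, hm⟩, false))
    have h1 := hinv g hg (e (.inl ⟨0, hn⟩, false))
    rw [hgy, Equiv.symm_apply_apply, Equiv.symm_apply_apply] at h1
    simp at h1
  · rintro ⟨z, hz⟩
    have hPm : P ∈ Subgroup.closure ({P, Γ} : Set (Perm (Fin (2 * n + 2 * m)))) :=
      Subgroup.subset_closure (by simp)
    have hΓm : Γ ∈ Subgroup.closure ({P, Γ} : Set (Perm (Fin (2 * n + 2 * m)))) :=
      Subgroup.subset_closure (by simp)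
    let rel : (Fin n ⊕ Fin m) × Bool → (Fin n ⊕ Fin m) × Bool → Prop := fun x y =>
      ∃ g ∈ Subgroup.closure ({P, Γ} : Set (Perm (Fin (2 * n + 2 * m)))), g (e x) = e y
    have hsymm : ∀ x y, rel x y → rel y x := by
      rintro x y ⟨g, hg, hgx⟩
      exact ⟨g⁻¹, inv_mem hg, by rw [Perm.inv_eq_iff_eq, hgx]⟩
    have htrans : ∀ x y w, rel x y → rel y w → rel x w := by
      rintro x y w ⟨g, hg, hgx⟩ ⟨g', hg', hgy⟩
      exact ⟨g' * g, mul_mem hg' hg, by rw [Perm.mul_apply, hgx, hgy]⟩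
    have hft : ∀ i, rel (i, false) (i, true) := fun i => ⟨Γ, hΓm, hΓe _⟩
    have hrot : ∀ (k : ℕ) i, rel (i, false) ((blockRotate n m ^ k) i, false) := by
      intro k i
      induction k with
      | zero => exact ⟨1, one_mem _, rfl⟩
      | succ k ih =>
        rw [pow_succ', Perm.mul_apply]
        exact htrans _ _ _ ih (htrans _ _ _ (hft _) ⟨Γ, hΓm, hΓe _⟩)
    have hfalse : ∀ x, rel (x.1, false) x := by
      rintro ⟨i, _ | _⟩
      · exact ⟨1, one_mem _, rfl⟩
      · exact hft i
    have hsame : ∀ x y, x.1.isRight = y.1.isRight → rel x y := by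
      intro x y hxy
      obtain ⟨k, hk⟩ := exists_blockRotate_pow x.1 y.1 hxy
      have h1 := hrot k x.1
      rw [hk] at h1
      exact htrans _ _ _ (hsymm _ _ (hfalse x)) (htrans _ _ _ h1 (hfalse y))
    have hzz : rel z (π z) := ⟨P, hPm, hPe z⟩
    have hall : ∀ x, rel z x := by
      intro x
      by_cases hx : z.1.isRight = x.1.isRight
      · exact hsame _ _ hx
      · refine htrans _ _ _ hzz (hsame _ _ ?_)
        exact (Bool.eq_not.2 hz).trans (Bool.eq_not.2 (Ne.symm hx)).symm
    intro x y
    obtain ⟨x, rfl⟩ := e.surjective x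
    obtain ⟨y, rfl⟩ := e.surjective y
    exact htrans _ _ _ (hsymm _ _ (hall x)) (hall y)

lemma graphBipartite_iff (hπ : ∀ x, π (π x) = x) :
    GraphBipartite ((pointEquiv n m).permCongr π) ↔ ∃ A, IsBlockSection π A := by
  set e := pointEquiv n m with he
  have hPe : ∀ x, e.permCongr π (e x) = e (π x) := permCongr_pointEquiv π
  constructor
  · rintro ⟨A, hA, hx⟩
    have hstab : ∀ x, e x ∈ A → e (π x) ∈ A := fun x hx => by
      rw [← hPe, ← hA]
      exact Set.mem_image_of_mem _ hx
    have hx' : ∀ i, Xor (e (i, false) ∈ A) (e (i, true) ∈ A) := fun i =>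
      hx (blockIndex i) (by have := blockIndex_lt i; omega)
    refine ⟨e ⁻¹' A, fun x => ⟨fun h => hπ x ▸ hstab _ h, hstab x⟩, ?_⟩
    rintro ⟨i, b⟩
    have := hx' i
    rw [xor_iff_not_iff] at this
    cases b
    · change e (i, true) ∈ A ↔ e (i, false) ∉ A
      tauto
    · change e (i, false) ∈ A ↔ e (i, true) ∉ A
      tauto
  · rintro ⟨A, hA, hx⟩
    refine ⟨e '' A, ?_, ?_⟩
    · ext y
      obtain ⟨x, rfl⟩ := e.surjective y
      rw [e.injective.mem_set_image, Set.image_image]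
      simp only [hPe]
      constructor
      · rintro ⟨z, hz, hzx⟩
        rw [← e.injective hzx, hA]
        exact hz
      · exact fun h => ⟨π x, (hA x).2 h, congrArg e (hπ x)⟩
    · intro k hk
      obtain ⟨i, rfl⟩ := exists_blockIndex_eq (n := n) (m := m) (k := k) (by omega)
      change Xor (e (i, false) ∈ e '' A) (e (i, true) ∈ e '' A)
      rw [e.injective.mem_set_image, e.injective.mem_set_image, xor_iff_not_iff]
      have := hx (i, true)
      rw [blockSwap_apply] at this
      simp only [Bool.not_true] at this
      tauto

lemma memJ_permCongr_iff (hn : 1 ≤ n) (hm : 1 ≤ m) :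
    (memJ n m ((pointEquiv n m).permCongr π) ∧
      ∀ x, (pointEquiv n m).permCongr π ((pointEquiv n m).permCongr π x) = x ∧
        (pointEquiv n m).permCongr π x ≠ x) ↔
    Even (n + m) ∧ IsEvenPairing (blockRotate n m) Sum.isRight π := by
  have hfpf : (∀ x, (pointEquiv n m).permCongr π ((pointEquiv n m).permCongr π x) = x ∧
      (pointEquiv n m).permCongr π x ≠ x) ↔ (∀ x, π (π x) = x) ∧ ∀ x, π x ≠ x := by
    rw [← Equiv.forall_congr_right (pointEquiv n m)]
    simp only [permCongr_pointEquiv, ne_eq, (pointEquiv n m).apply_eq_iff_eq, forall_and]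
  rw [hfpf]
  constructor
  · rintro ⟨⟨⟨hjt, hcc⟩, hbip, hsep⟩, hinv, hne⟩
    rw [separatesEven_iff] at hsep
    rw [cycleCount_add_eq_iff π hinv hne hsep] at hcc
    rw [jointTrans_iff π hn hm] at hjt
    rw [graphBipartite_iff π hinv] at hbip
    obtain ⟨A, hA⟩ := hbip
    refine ⟨?_, hinv, hne, hsep, hcc, hjt⟩
    simpa using even_card_of_isBlockSection hinv hne hA
  · rintro ⟨heven, h⟩
    refine ⟨⟨⟨?_, ?_⟩, ?_, ?_⟩, h.invol, h.ne⟩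
    · exact (jointTrans_iff π hn hm).2 h.cross
    · exact (cycleCount_add_eq_iff π h.invol h.ne h.sep).2 h.meets
    · exact (graphBipartite_iff π h.invol).2
        (h.exists_isBlockSection isRight_blockRotate exists_blockRotate_pow (by simpa using heven))
    · exact (separatesEven_iff π).2 h.sep

end Transfer

lemma ncard_isEvenPairing_blockRotate {n m : ℕ} (hn : 1 ≤ n) :
    {π | IsEvenPairing (blockRotate n m) Sum.isRight π}.ncard =
      m * Nat.choose (n + m - 1) (n - 1) := by
  have : Nonempty (Fin n ⊕ Fin m) := ⟨.inl ⟨0, hn⟩⟩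
  have hL : (colorPart Sum.isRight false (Finset.univ : Finset (Fin n ⊕ Fin m))).card = n := by
    have : colorPart Sum.isRight false (Finset.univ : Finset (Fin n ⊕ Fin m)) =
        Finset.univ.map Function.Embedding.inl := by
      ext (i | i) <;> simp [mem_colorPart]
    rw [this, Finset.card_map, Finset.card_univ, Fintype.card_fin]
  have hT : (colorPart Sum.isRight true (Finset.univ : Finset (Fin n ⊕ Fin m))).card = m := by
    have : colorPart Sum.isRight true (Finset.univ : Finset (Fin n ⊕ Fin m)) =
        Finset.univ.map Function.Embedding.inr := by
      ext (i | i) <;> simp [mem_colorPart]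
    rw [this, Finset.card_map, Finset.card_univ, Fintype.card_fin]
  rw [ncard_isEvenPairing isRight_blockRotate exists_blockRotate_pow,
    ncard_isReflection isRight_blockRotate exists_blockRotate_pow,
    ncard_marked (by rw [hL]; exact hn), hL, hT, Fintype.card_sum,
    Fintype.card_fin, Fintype.card_fin]

lemma mul_choose_eq_factorial_div {n m : ℕ} (hn : 1 ≤ n) (hm : 1 ≤ m) :
    m * Nat.choose (n + m - 1) (n - 1) =
      (n + m - 1).factorial / ((n - 1).factorial * (m - 1).factorial) := by
  refine (Nat.div_eq_of_eq_mul_left (by positivity) ?_).symm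
  have h1 := Nat.choose_mul_factorial_mul_factorial (show n - 1 ≤ n + m - 1 by omega)
  rw [show n + m - 1 - (n - 1) = m by omega, ← Nat.mul_factorial_pred (show m ≠ 0 by omega)] at h1
  rw [← h1]
  ring

end AnnularPairing

theorem stmt_13 (n m : ℕ) (hn : 1 ≤ n) (hm : 1 ≤ m) :
    Set.ncard {π : Equiv.Perm (Fin (2 * n + 2 * m)) |
        memJ n m π ∧ ∀ x, π (π x) = x ∧ π x ≠ x} =
      (if Even (n + m) then m * Nat.choose (n + m - 1) (n - 1) else 0) ∧
    m * Nat.choose (n + m - 1) (n - 1) =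
      (n + m - 1).factorial / ((n - 1).factorial * (m - 1).factorial) := by
  refine ⟨?_, AnnularPairing.mul_choose_eq_factorial_div hn hm⟩
  have hiff := fun π => AnnularPairing.memJ_permCongr_iff (n := n) (m := m) π hn hm
  have himage : {π : Equiv.Perm (Fin (2 * n + 2 * m)) |
      memJ n m π ∧ ∀ x, π (π x) = x ∧ π x ≠ x} =
      (AnnularPairing.pointEquiv n m).permCongr '' {π | Even (n + m) ∧
        AnnularPairing.IsEvenPairing (AnnularPairing.blockRotate n m) Sum.isRight π} := by
    ext P
    obtain ⟨π, rfl⟩ := (AnnularPairing.pointEquiv n m).permCongr.surjective P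
    rw [(AnnularPairing.pointEquiv n m).permCongr.injective.mem_set_image]
    exact hiff π
  rw [himage, Set.ncard_image_of_injective _ (AnnularPairing.pointEquiv n m).permCongr.injective]
  split_ifs with heven
  · simpa [heven] using AnnularPairing.ncard_isEvenPairing_blockRotate (m := m) hn
  · simp [heven]
end
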